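/- arXiv:2010.09502 — 2 statements merged into one kernel-verified Lean document; each statement's English description precedes it below -/
import Mathlib

section
/- For every x > 0 and every n ∈ ℕ, n ≥ 1, |Im[J_{in/2}(x)²]| / sinh(πn/2) ≤ 2·e^{2x}/(πn). -/
open MeasureTheory Filter Topology

/-- Bessel function of the first kind of complex order `ν` at real `x > 0`. -/
noncomputable def besselJ (ν : ℂ) (x : ℝ) : ℂ :=
  ∑' k : ℕ, ((-1 : ℂ) ^ k * Complex.exp ((ν + 2 * k) * (Real.log (x / 2) : ℂ))) /
    ((Nat.factorial k : ℂ) * Complex.Gamma (ν + k + 1))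

/-- Bessel function of the second kind of complex order `ν` at real `x > 0`. -/
noncomputable def besselY (ν : ℂ) (x : ℝ) : ℂ :=
  (besselJ ν x * Complex.cos (Real.pi * ν) - besselJ (-ν) x) / Complex.sin (Real.pi * ν)

/-- Bessel function of the first kind of order `0` (real-valued). -/
noncomputable def besselJ0 (x : ℝ) : ℝ :=
  ∑' k : ℕ, (-1 : ℝ) ^ k * (x / 2) ^ (2 * k) / (Nat.factorial k : ℝ) ^ 2

/-- Lommel function `S_{-1,0}` for `x > 0`. -/
noncomputable def lommelS (x : ℝ) : ℝ :=
  ∫ t in Set.Ioi (0 : ℝ), t * Real.exp (-x * Real.sinh t)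

/-- Struve function `K₀` for `x > 0`. -/
noncomputable def struveK0 (x : ℝ) : ℝ :=
  (2 / Real.pi) * ∫ t in Set.Ioi (0 : ℝ), Real.exp (-x * Real.sinh t)

/-- Bessel function of the second kind of order `0` (real-valued, for `x > 0`). -/
noncomputable def besselY0 (x : ℝ) : ℝ :=
  (2 / Real.pi) * ((Real.log (x / 2) + Real.eulerMascheroniConstant) * besselJ0 x +
    ∑' k : ℕ, (-1 : ℝ) ^ k * ((harmonic (k + 1) : ℚ) : ℝ) * (x / 2) ^ (2 * (k + 1)) /
      (Nat.factorial (k + 1) : ℝ) ^ 2)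

/-- Struve function `H₀`: `H₀ = K₀ˢ + Y₀`. -/
noncomputable def struveH0 (x : ℝ) : ℝ := struveK0 x + besselY0 x

/-!
For `Re ν ≥ -1/2` the series of `J_ν` is dominated by that of `cosh`: in the `k`-th term
`Γ(ν + k + 1) = (ν + 1)_k Γ(ν + 1)`, where `|(ν + 1)_k| ≥ (1/2)_k`, and `4 ^ k k! (1/2)_k = (2k)!`.
Hence `|J_ν(x)| ≤ (x/2) ^ (Re ν) cosh x / |Γ(ν + 1)|`. For imaginary order `ν = it` the reflection
formula evaluates the denominator, `|Γ(1 + it)|² = πt / sinh (πt)`, and this is the `sinh` of the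
theorem.
-/

theorem ascPochhammer_eval_le_norm_ascPochhammer_eval {a : ℝ} {s : ℂ} (ha : 0 ≤ a)
    (has : a ≤ s.re) (k : ℕ) :
    (ascPochhammer ℝ k).eval a ≤ ‖(ascPochhammer ℂ k).eval s‖ := by
  induction k with
  | zero => simp
  | succ k ih =>
    have factor_le : a + k ≤ ‖s + k‖ :=
      calc a + k ≤ (s + k).re := by simpa using has
        _ ≤ ‖s + k‖ := Complex.re_le_norm _
    rw [ascPochhammer_succ_eval, ascPochhammer_succ_eval, norm_mul]
    exact mul_le_mul ih factor_le (by positivity) (norm_nonneg _)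

theorem factorial_two_mul_eq_mul_ascPochhammer_eval_half {K : Type*} [Field K] [NeZero (2 : K)]
    (k : ℕ) :
    ((2 * k).factorial : K) = 4 ^ k * k.factorial * (ascPochhammer K k).eval (1 / 2) := by
  induction k with
  | zero => simp
  | succ k ih =>
    have h2 : (2 : K) ≠ 0 := two_ne_zero
    rw [Nat.mul_succ, Nat.factorial_succ, Nat.factorial_succ, Nat.factorial_succ,
      ascPochhammer_succ_eval, Nat.cast_mul, Nat.cast_mul, ih]
    push_cast
    field_simp
    ring

theorem norm_Gamma_I_mul_add_one_sq {t : ℝ} (ht : t ≠ 0) :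
    ‖Complex.Gamma (Complex.I * t + 1)‖ ^ 2 = Real.pi * t / Real.sinh (Real.pi * t) := by
  have hIt : Complex.I * t ≠ 0 := by simp [ht]
  have conj_Gamma : (starRingEnd ℂ) (Complex.Gamma (Complex.I * t + 1)) =
      Complex.Gamma (1 - Complex.I * t) := by
    rw [← Complex.Gamma_conj]
    congr 1
    simp [sub_eq_neg_add]
  have sin_eq : Complex.sin (Real.pi * (Complex.I * t)) =
      Complex.sinh (Real.pi * t) * Complex.I := by
    rw [← Complex.sin_mul_I]
    ring_nf
  apply Complex.ofReal_injective
  calc ((‖Complex.Gamma (Complex.I * t + 1)‖ ^ 2 : ℝ) : ℂ)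
      = Complex.Gamma (Complex.I * t + 1) * Complex.Gamma (1 - Complex.I * t) := by
        rw [← conj_Gamma, Complex.mul_conj', Complex.ofReal_pow]
    _ = Complex.I * t * (Real.pi / Complex.sin (Real.pi * (Complex.I * t))) := by
        rw [Complex.Gamma_add_one _ hIt, mul_assoc, Complex.Gamma_mul_Gamma_one_sub]
    _ = ((Real.pi * t / Real.sinh (Real.pi * t) : ℝ) : ℂ) := by
        rw [sin_eq]
        push_cast
        field_simp

theorem cosh_le_exp_of_nonneg {x : ℝ} (hx : 0 ≤ x) : Real.cosh x ≤ Real.exp x := by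
  rw [← Real.cosh_add_sinh]
  exact le_add_of_nonneg_right (Real.sinh_nonneg_iff.2 hx)

theorem norm_exp_mul_log {y : ℝ} (hy : 0 < y) (s : ℂ) :
    ‖Complex.exp (s * Real.log y)‖ = y ^ s.re := by
  rw [Complex.norm_exp, Complex.re_mul_ofReal, Real.rpow_def_of_pos hy, mul_comm]

section ComplexOrder

variable {ν : ℂ} {x : ℝ}

theorem ascPochhammer_eval_half_mul_norm_Gamma_le (hν : -1 / 2 ≤ ν.re) (k : ℕ) :
    (ascPochhammer ℝ k).eval (1 / 2) * ‖Complex.Gamma (ν + 1)‖ ≤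
      ‖Complex.Gamma (ν + k + 1)‖ := by
  have half_le_re : 1 / 2 ≤ (ν + 1).re := by
    rw [Complex.add_re, Complex.one_re]
    linarith
  have not_pole (m : ℕ) : ν + 1 ≠ -m := fun h => by
    have hre : (ν + 1).re = -m := by simp [h]
    linarith [m.cast_nonneg (α := ℝ)]
  have hΓ : Complex.Gamma (ν + 1) ≠ 0 := Complex.Gamma_ne_zero not_pole
  rw [add_right_comm, ← div_mul_cancel₀ (Complex.Gamma (ν + 1 + k)) hΓ,
    Complex.Gamma_add_nat_div_Gamma_eq _ not_pole, norm_mul]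
  gcongr
  exact ascPochhammer_eval_le_norm_ascPochhammer_eval one_half_pos.le half_le_re k

theorem norm_besselJ_summand_le (hν : -1 / 2 ≤ ν.re) (hx : 0 < x) (k : ℕ) :
    ‖(-1 : ℂ) ^ k * Complex.exp ((ν + 2 * k) * (Real.log (x / 2) : ℂ)) /
        ((k.factorial : ℂ) * Complex.Gamma (ν + k + 1))‖ ≤
      (x / 2) ^ ν.re / ‖Complex.Gamma (ν + 1)‖ * (x ^ (2 * k) / (2 * k).factorial) := by
  have half_x_pos : 0 < x / 2 := by positivity
  have hΓ : 0 < ‖Complex.Gamma (ν + 1)‖ := by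
    rw [norm_pos_iff]
    refine Complex.Gamma_ne_zero_of_re_pos ?_
    rw [Complex.add_re, Complex.one_re]
    linarith
  have pochhammer_pos : 0 < (ascPochhammer ℝ k).eval (1 / 2) := ascPochhammer_pos k _ one_half_pos
  have numerator_eq : ‖(-1 : ℂ) ^ k * Complex.exp ((ν + 2 * k) * (Real.log (x / 2) : ℂ))‖ =
      (x / 2) ^ ν.re * (x / 2) ^ (2 * k) := by
    have re_eq : (ν + 2 * k).re = ν.re + (2 * k : ℕ) := by simp
    rw [norm_mul, norm_pow, norm_neg, norm_one, one_pow, one_mul, norm_exp_mul_log half_x_pos,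
      re_eq, Real.rpow_add_natCast half_x_pos.ne']
  rw [norm_div, norm_mul (k.factorial : ℂ), Complex.norm_natCast, numerator_eq]
  calc (x / 2) ^ ν.re * (x / 2) ^ (2 * k) / (k.factorial * ‖Complex.Gamma (ν + k + 1)‖)
      ≤ (x / 2) ^ ν.re * (x / 2) ^ (2 * k) /
          (k.factorial * ((ascPochhammer ℝ k).eval (1 / 2) * ‖Complex.Gamma (ν + 1)‖)) := by
        gcongr
        exact ascPochhammer_eval_half_mul_norm_Gamma_le hν k
    _ = (x / 2) ^ ν.re / ‖Complex.Gamma (ν + 1)‖ * (x ^ (2 * k) / (2 * k).factorial) := by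
        rw [factorial_two_mul_eq_mul_ascPochhammer_eval_half, div_pow x, pow_mul 2 2 k,
          show (2 : ℝ) ^ 2 = 4 by norm_num]
        field_simp

theorem norm_besselJ_le (hν : -1 / 2 ≤ ν.re) (hx : 0 < x) :
    ‖besselJ ν x‖ ≤ (x / 2) ^ ν.re / ‖Complex.Gamma (ν + 1)‖ * Real.cosh x :=
  tsum_of_norm_bounded ((Real.hasSum_cosh x).mul_left _) (norm_besselJ_summand_le hν hx)

end ComplexOrder

theorem norm_besselJ_I_mul_sq_le {x t : ℝ} (hx : 0 < x) (ht : t ≠ 0) :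
    ‖besselJ (Complex.I * t) x‖ ^ 2 ≤
      Real.sinh (Real.pi * t) / (Real.pi * t) * Real.cosh x ^ 2 := by
  have re_eq_zero : (Complex.I * t).re = 0 := by simp
  have norm_le : ‖besselJ (Complex.I * t) x‖ ≤
      1 / ‖Complex.Gamma (Complex.I * t + 1)‖ * Real.cosh x := by
    simpa only [re_eq_zero, Real.rpow_zero] using
      norm_besselJ_le (ν := Complex.I * t) (by rw [re_eq_zero]; norm_num) hx
  calc ‖besselJ (Complex.I * t) x‖ ^ 2
      ≤ (1 / ‖Complex.Gamma (Complex.I * t + 1)‖ * Real.cosh x) ^ 2 := by gcongr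
    _ = Real.sinh (Real.pi * t) / (Real.pi * t) * Real.cosh x ^ 2 := by
        rw [mul_pow, div_pow, one_pow, norm_Gamma_I_mul_add_one_sq ht, one_div_div]

theorem statement13_general (x : ℝ) (hx : 0 < x) (t : ℝ) (ht : 0 < t) :
    |((besselJ (Complex.I * t) x) ^ 2).im| / Real.sinh (Real.pi * t)
      ≤ Real.exp (2 * x) / (Real.pi * t) := by
  have sinh_pos : 0 < Real.sinh (Real.pi * t) := Real.sinh_pos_iff.2 (by positivity)
  rw [div_le_iff₀ sinh_pos]
  calc |((besselJ (Complex.I * t) x) ^ 2).im|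
      ≤ ‖besselJ (Complex.I * t) x‖ ^ 2 := (Complex.abs_im_le_norm _).trans_eq (norm_pow _ 2)
    _ ≤ Real.sinh (Real.pi * t) / (Real.pi * t) * Real.cosh x ^ 2 :=
        norm_besselJ_I_mul_sq_le hx ht.ne'
    _ ≤ Real.sinh (Real.pi * t) / (Real.pi * t) * Real.exp x ^ 2 := by
        gcongr
        exact cosh_le_exp_of_nonneg hx.le
    _ = Real.exp (2 * x) / (Real.pi * t) * Real.sinh (Real.pi * t) := by
        rw [← Real.exp_nat_mul, Nat.cast_ofNat]
        ring

theorem statement13 (x : ℝ) (hx : 0 < x) (n : ℕ) (hn : 1 ≤ n) :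
    |((besselJ (Complex.I * n / 2) x) ^ 2).im| / Real.sinh (Real.pi * n / 2)
      ≤ 2 * Real.exp (2 * x) / (Real.pi * n) := by
  convert statement13_general x hx (n / 2) (by positivity) using 1
  · push_cast
    simp only [mul_div_assoc]
  · field_simp
end

section
/- Let ψ : ℝ → ℂ be a 2π-periodic function satisfying the Lipschitz condition |ψ(u) − ψ(v)| ≤ C·|u−v| for some constant C > 0 and all u, v ∈ ℝ. Set φ(u) = ψ(u)·sinh(2u) and define f(x) = ∫_{−π}^π (x·K₀ˢ(2x·cosh u) − 1/(π·cosh u)) · φ(u) du for x > 0. Then for every n ∈ ℕ, n ≥ 1, (1/sinh(πn/2)) · ∫₀^∞ Im[J_{in/2}(x)²] · f(x) dx = (2/(π·sinh(πn))) · ∫_{−π}^π ψ(u)·sin(nu) du. -/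
open MeasureTheory Filter Topology

/-!
Differentiating under the integral sign and using Bessel's equation gives the Laplace transform of
`J_{iτ}`. Neumann's formula `J_ν(x)² = (2 / π) ∫ J_{2ν}(2 x cos θ) dθ` over `(0, π / 2)` turns it
into the Laplace transform of `Im J_{iτ/2}²`, which at `p` equals
`-(2 / π) sinh (πτ / 2) ∫ cos (τ s) / √(p² + 4 cosh² s) ds`.

After an integration by parts the Struve kernel is a superposition of the exponentials `e^{-px}`
with `p = 2 cosh u sinh t`, weighted by `sinh t / cosh² t`. Integrating the Laplace transforms
against this weight collapses the square root to `1 / (2 (cosh u + cosh s))`, whose Fourier cosine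
transform in `s` is a multiple of `sin (τ u) / (sinh u sinh (πτ))`. The factor `sinh (2 u)` in `φ`
cancels the hyperbolic functions of `u`, and Fubini's theorem in `(x, u)` finishes the proof.
-/

section LogisticDensity

/-- The density of the standard logistic distribution, that is the derivative of `Real.sigmoid`. -/
noncomputable def logisticDensity (t : ℝ) : ℝ := Real.sigmoid t * (1 - Real.sigmoid t)

lemma logisticDensity_eq (t : ℝ) : logisticDensity t = 1 / (2 * (Real.cosh t + 1)) := by
  have := Real.exp_pos t
  rw [logisticDensity, Real.sigmoid_def, Real.cosh_eq, Real.exp_neg]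
  field_simp
  ring

lemma logisticDensity_nonneg (t : ℝ) : 0 ≤ logisticDensity t :=
  mul_nonneg (Real.sigmoid_nonneg t) (sub_nonneg.2 (Real.sigmoid_le_one t))

lemma integral_sigmoid_smul_logisticDensity {E : Type*} [NormedAddCommGroup E] [NormedSpace ℝ E]
    (g : ℝ → E) :
    ∫ t, logisticDensity t • g (Real.sigmoid t) = ∫ x in Set.Ioo (0 : ℝ) 1, g x := by
  rw [← Real.range_sigmoid, ← Set.image_univ,
    integral_image_eq_integral_abs_deriv_smul (f' := logisticDensity) MeasurableSet.univ
      (fun x _ ↦ (Real.hasDerivAt_sigmoid x).hasDerivWithinAt) Real.sigmoid_injective.injOn,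
    setIntegral_univ]
  simp only [abs_of_nonneg (logisticDensity_nonneg _)]

lemma integrable_logisticDensity : Integrable logisticDensity := by
  have h := (integrableOn_image_iff_integrableOn_abs_deriv_smul (f' := logisticDensity)
    MeasurableSet.univ (fun x _ ↦ (Real.hasDerivAt_sigmoid x).hasDerivWithinAt)
    Real.sigmoid_injective.injOn (fun _ ↦ (1 : ℝ))).1 (by simp [Real.range_sigmoid])
  simpa [abs_of_nonneg (logisticDensity_nonneg _)] using h

lemma sigmoid_cpow_mul_one_sub_sigmoid_cpow_neg (z : ℂ) (t : ℝ) :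
    (Real.sigmoid t : ℂ) ^ z * (1 - Real.sigmoid t : ℂ) ^ (-z) = Complex.exp (z * t) := by
  have hpos := Real.sigmoid_pos t
  have hneg := Real.sigmoid_pos (-t)
  have hlog : Real.log (Real.sigmoid (-t)) = Real.log (Real.sigmoid t) - t := by
    rw [← Real.sigmoid_mul_rexp_neg, Real.log_mul hpos.ne' (Real.exp_pos _).ne', Real.log_exp,
      sub_eq_add_neg]
  rw [← Complex.ofReal_one, ← Complex.ofReal_sub, ← Real.sigmoid_neg,
    Complex.cpow_def_of_ne_zero (by exact_mod_cast hpos.ne'),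
    Complex.cpow_def_of_ne_zero (by exact_mod_cast hneg.ne'), ← Complex.ofReal_log hpos.le,
    ← Complex.ofReal_log hneg.le, hlog, ← Complex.exp_add]
  push_cast
  ring_nf

lemma integral_logisticDensity_mul_exp (z : ℂ) :
    ∫ t : ℝ, (logisticDensity t : ℂ) * Complex.exp (z * t) =
      Complex.betaIntegral (1 + z) (1 - z) := by
  rw [Complex.betaIntegral, intervalIntegral.integral_of_le zero_le_one,
    integral_Ioc_eq_integral_Ioo, ← integral_sigmoid_smul_logisticDensity]
  refine integral_congr_ae (Eventually.of_forall fun t ↦ ?_)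
  simp only [add_sub_cancel_left, sub_sub_cancel_left, Complex.real_smul,
    sigmoid_cpow_mul_one_sub_sigmoid_cpow_neg]

lemma betaIntegral_one_add_I_mul_one_sub_I_mul {a : ℝ} (ha : a ≠ 0) :
    Complex.betaIntegral (1 + Complex.I * a) (1 - Complex.I * a) =
      (Real.pi * a / Real.sinh (Real.pi * a) : ℝ) := by
  have hbeta := Complex.Gamma_mul_Gamma_eq_betaIntegral (s := 1 + Complex.I * a)
    (t := 1 - Complex.I * a) (by simp) (by simp)
  have hsin : Complex.sin (Real.pi * (Complex.I * a)) =
      Complex.sinh (Real.pi * a) * Complex.I := by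
    rw [← Complex.sin_mul_I]; ring_nf
  have hsinh : Complex.sinh (Real.pi * a) ≠ 0 := by
    exact_mod_cast Real.sinh_ne_zero.2 (mul_ne_zero Real.pi_ne_zero ha)
  rw [show 1 + Complex.I * a + (1 - Complex.I * a) = 2 by ring, Complex.Gamma_ofNat_eq_factorial,
    Nat.factorial_one, Nat.cast_one, one_mul, add_comm, Complex.Gamma_add_one _ (by simp [ha]),
    mul_assoc, Complex.Gamma_mul_Gamma_one_sub, hsin] at hbeta
  rw [add_comm, ← hbeta]
  push_cast
  field_simp

lemma integral_logisticDensity_mul_exp_I_mul {a : ℝ} (ha : a ≠ 0) :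
    ∫ t : ℝ, (logisticDensity t : ℂ) * Complex.exp (Complex.I * a * t) =
      (Real.pi * a / Real.sinh (Real.pi * a) : ℝ) := by
  rw [integral_logisticDensity_mul_exp, betaIntegral_one_add_I_mul_one_sub_I_mul ha]

lemma norm_exp_mul_ofReal_of_re_eq_zero {c : ℂ} (hc : c.re = 0) (t : ℝ) :
    ‖Complex.exp (c * t)‖ = 1 := by
  rw [Complex.norm_exp, Complex.re_mul_ofReal, hc, zero_mul, Real.exp_zero]

lemma integrable_exp_mul_logisticDensity_comp_add (a u : ℝ) :
    Integrable fun t : ℝ ↦ Complex.exp (Complex.I * a * t) * (logisticDensity (t + u) : ℂ) :=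
  (integrable_logisticDensity.comp_add_right u).ofReal.bdd_mul (c := 1)
    (Continuous.aestronglyMeasurable (by fun_prop))
    (Eventually.of_forall fun t ↦ (norm_exp_mul_ofReal_of_re_eq_zero (by simp) t).le)

lemma integral_exp_mul_logisticDensity_comp_add {a : ℝ} (ha : a ≠ 0) (u : ℝ) :
    ∫ t : ℝ, Complex.exp (Complex.I * a * t) * (logisticDensity (t + u) : ℂ) =
      Complex.exp (-(Complex.I * a * u)) * (Real.pi * a / Real.sinh (Real.pi * a) : ℝ) := by
  have hshift := integral_add_right_eq_self (μ := volume)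
    (fun t : ℝ ↦ Complex.exp (Complex.I * a * (t - u : ℝ)) * (logisticDensity t : ℂ)) u
  simp only [add_sub_cancel_right] at hshift
  rw [hshift, ← integral_logisticDensity_mul_exp_I_mul ha, ← integral_const_mul]
  refine integral_congr_ae (Eventually.of_forall fun t ↦ ?_)
  simp only
  rw [show Complex.I * a * (t - u : ℝ) = -(Complex.I * a * u) + Complex.I * a * t by
    push_cast; ring, Complex.exp_add]
  ring

end LogisticDensity

section CoshTransform

lemma sigmoid_add_sub_sigmoid_sub (t u : ℝ) : Real.sigmoid (t + u) - Real.sigmoid (t - u) =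
    Real.sinh u / (Real.cosh t + Real.cosh u) := by
  have := Real.exp_pos t
  have := Real.exp_pos u
  rw [eq_div_iff (by positivity), Real.sigmoid_def, Real.sigmoid_def, Real.cosh_eq, Real.cosh_eq,
    Real.sinh_eq]
  simp only [Real.exp_neg, Real.exp_add, Real.exp_sub]
  field_simp
  ring

lemma inv_cosh_add_cosh_le (t u : ℝ) :
    1 / (Real.cosh t + Real.cosh u) ≤ 2 * logisticDensity t := by
  rw [logisticDensity_eq,
    show 2 * (1 / (2 * (Real.cosh t + 1))) = 1 / (Real.cosh t + 1) by field_simp]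
  gcongr
  exact Real.one_le_cosh u

lemma integrable_inv_cosh_add_cosh (u : ℝ) :
    Integrable fun t ↦ 1 / (Real.cosh t + Real.cosh u) := by
  refine (integrable_logisticDensity.const_mul 2).mono'
    (Continuous.aestronglyMeasurable ?_) (Eventually.of_forall fun t ↦ ?_)
  · exact continuous_const.div (by fun_prop) fun t ↦ by positivity
  · rw [Real.norm_of_nonneg (by positivity)]
    exact inv_cosh_add_cosh_le t u

lemma integrable_exp_mul_inv_cosh_add_cosh (a u : ℝ) :
    Integrable fun t : ℝ ↦
      Complex.exp (Complex.I * a * t) * (1 / (Real.cosh t + Real.cosh u) : ℝ) :=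
  (integrable_inv_cosh_add_cosh u).ofReal.bdd_mul (c := 1)
    (Continuous.aestronglyMeasurable (by fun_prop))
    (Eventually.of_forall fun t ↦ (norm_exp_mul_ofReal_of_re_eq_zero (by simp) t).le)

lemma hasDerivAt_exp_mul_ofReal (c : ℂ) (t : ℝ) :
    HasDerivAt (fun s : ℝ ↦ Complex.exp (c * s)) (c * Complex.exp (c * t)) t := by
  have hlinear : HasDerivAt (fun s : ℝ ↦ c * (s : ℂ)) c t := by
    simpa using (Complex.ofRealCLM.hasDerivAt (x := t)).const_mul c
  exact hlinear.cexp.congr_deriv (mul_comm _ _)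

-- `sinh u / (cosh t + cosh u) = σ (t + u) - σ (t - u)`, so integration by parts in `t` produces
-- two translates of the logistic density.
lemma I_mul_sinh_mul_integral_exp_div_cosh_add_cosh (a u : ℝ) :
    Complex.I * a * (Real.sinh u *
        ∫ t : ℝ, Complex.exp (Complex.I * a * t) * (1 / (Real.cosh t + Real.cosh u) : ℝ)) =
      (∫ t : ℝ, Complex.exp (Complex.I * a * t) * (logisticDensity (t + -u) : ℂ)) -
        ∫ t : ℝ, Complex.exp (Complex.I * a * t) * (logisticDensity (t + u) : ℂ) := by
  have hσ (t : ℝ) :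
      HasDerivAt (fun s ↦ ((Real.sinh u * (1 / (Real.cosh s + Real.cosh u)) : ℝ) : ℂ))
        (logisticDensity (t + u) - logisticDensity (t + -u) : ℂ) t := by
    simp_rw [mul_one_div, ← sigmoid_add_sub_sigmoid_sub, ← Complex.ofReal_sub, ← sub_eq_add_neg]
    exact (((Real.hasDerivAt_sigmoid (t + u)).comp_add_const t u).sub
      ((Real.hasDerivAt_sigmoid (t - u)).comp_sub_const t u)).ofReal_comp
  have hplus := integrable_exp_mul_logisticDensity_comp_add a u
  have hminus := integrable_exp_mul_logisticDensity_comp_add a (-u)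
  have hcosh := (integrable_exp_mul_inv_cosh_add_cosh a u).const_mul (Real.sinh u : ℂ)
  have hparts := integral_mul_deriv_eq_deriv_mul_of_integrable
    (fun t _ ↦ hasDerivAt_exp_mul_ofReal (Complex.I * a) t) (fun t _ ↦ hσ t)
    ((hplus.sub hminus).congr (Eventually.of_forall fun t ↦ (mul_sub _ _ _).symm))
    ((hcosh.const_mul (Complex.I * a)).congr
      (Eventually.of_forall fun t ↦ by simp only [Pi.mul_apply, Complex.ofReal_mul]; ring))
    (hcosh.congr
      (Eventually.of_forall fun t ↦ by simp only [Pi.mul_apply, Complex.ofReal_mul]; ring))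
  simp_rw [mul_sub] at hparts
  rw [integral_sub hplus hminus] at hparts
  rw [← integral_const_mul, ← integral_const_mul, ← neg_sub, hparts, neg_neg]
  refine integral_congr_ae (Eventually.of_forall fun t ↦ ?_)
  simp only [Complex.ofReal_mul]
  ring

lemma sinh_mul_integral_exp_div_cosh_add_cosh {a : ℝ} (ha : a ≠ 0) (u : ℝ) :
    (Real.sinh u : ℂ) *
        ∫ t : ℝ, Complex.exp (Complex.I * a * t) * (1 / (Real.cosh t + Real.cosh u) : ℝ) =
      (2 * Real.pi * Real.sin (a * u) / Real.sinh (Real.pi * a) : ℝ) := by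
  have hsin : Complex.exp (Complex.I * a * u) - Complex.exp (-(Complex.I * a * u)) =
      2 * Complex.I * Real.sin (a * u) := by
    rw [show Complex.I * a * u = (a * u : ℝ) * Complex.I by push_cast; ring, Complex.ofReal_sin,
      Complex.sin, neg_mul]
    linear_combination (Complex.exp ((a * u : ℝ) * Complex.I) -
      Complex.exp (-((a * u : ℝ) * Complex.I))) * Complex.I_sq
  refine mul_left_cancel₀ (mul_ne_zero Complex.I_ne_zero (Complex.ofReal_ne_zero.2 ha)) ?_
  rw [I_mul_sinh_mul_integral_exp_div_cosh_add_cosh, integral_exp_mul_logisticDensity_comp_add ha,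
    integral_exp_mul_logisticDensity_comp_add ha, ← sub_mul, Complex.ofReal_neg, mul_neg, neg_neg,
    hsin]
  push_cast
  ring

lemma sinh_mul_integral_Ioi_cos_div_cosh_add_cosh {a : ℝ} (ha : a ≠ 0) (u : ℝ) :
    Real.sinh u * ∫ t in Set.Ioi (0 : ℝ), Real.cos (a * t) / (Real.cosh t + Real.cosh u) =
      Real.pi * Real.sin (a * u) / Real.sinh (Real.pi * a) := by
  have hre := congrArg Complex.re (sinh_mul_integral_exp_div_cosh_add_cosh ha u)
  rw [Complex.re_ofReal_mul, Complex.ofReal_re, ← RCLike.re_eq_complex_re,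
    ← integral_re (integrable_exp_mul_inv_cosh_add_cosh a u)] at hre
  have heven (t : ℝ) :
      RCLike.re (Complex.exp (Complex.I * a * t) * (1 / (Real.cosh t + Real.cosh u) : ℝ)) =
        Real.cos (a * |t|) / (Real.cosh |t| + Real.cosh u) := by
    rw [RCLike.re_eq_complex_re, Complex.re_mul_ofReal, mul_one_div, Real.cosh_abs,
      ← Real.cos_abs (a * |t|), abs_mul, abs_abs, ← abs_mul, Real.cos_abs, mul_assoc, mul_comm,
      ← Complex.ofReal_mul, Complex.exp_ofReal_mul_I_re]
  simp_rw [heven] at hre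
  rw [integral_comp_abs (f := fun t ↦ Real.cos (a * t) / (Real.cosh t + Real.cosh u))] at hre
  linear_combination hre / 2

end CoshTransform

section StruveKernel

lemma tendsto_sinh_atTop : Tendsto Real.sinh atTop atTop :=
  Real.sinhOrderIso.tendsto_atTop

lemma tendsto_cosh_atTop : Tendsto Real.cosh atTop atTop :=
  tendsto_atTop_mono (fun t ↦ (Real.sinh_lt_cosh t).le) tendsto_sinh_atTop

lemma integrableOn_exp_neg_mul_sinh {y : ℝ} (hy : 0 < y) :
    IntegrableOn (fun t ↦ Real.exp (-y * Real.sinh t)) (Set.Ioi 0) := by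
  refine (exp_neg_integrableOn_Ioi 0 hy).mono' (Continuous.aestronglyMeasurable (by fun_prop)) ?_
  filter_upwards [ae_restrict_mem measurableSet_Ioi] with t ht
  rw [Real.norm_of_nonneg (Real.exp_pos _).le, Real.exp_le_exp]
  exact mul_le_mul_of_nonpos_left (Real.self_le_sinh_iff.2 (Set.mem_Ioi.1 ht).le) (by linarith)

lemma continuous_sinh_div_cosh_sq : Continuous fun t ↦ Real.sinh t / Real.cosh t ^ 2 :=
  Real.continuous_sinh.div (Real.continuous_cosh.pow 2) fun t ↦ by positivity

lemma sinh_div_cosh_sq_nonneg {t : ℝ} (ht : 0 ≤ t) : 0 ≤ Real.sinh t / Real.cosh t ^ 2 :=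
  div_nonneg (Real.sinh_nonneg_iff.2 ht) (by positivity)

lemma sinh_div_cosh_sq_le_one (t : ℝ) : Real.sinh t / Real.cosh t ^ 2 ≤ 1 := by
  rw [div_le_one (by positivity), Real.cosh_sq]
  nlinarith [sq_nonneg (Real.sinh t - 1 / 2)]

lemma integrableOn_exp_neg_mul_sinh_mul_sinh_div_cosh_sq {y : ℝ} (hy : 0 < y) :
    IntegrableOn (fun t ↦ Real.exp (-y * Real.sinh t) * (Real.sinh t / Real.cosh t ^ 2))
      (Set.Ioi 0) := by
  refine (integrableOn_exp_neg_mul_sinh hy).mono' (Continuous.aestronglyMeasurable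
    (by have := continuous_sinh_div_cosh_sq; fun_prop)) ?_
  filter_upwards [ae_restrict_mem measurableSet_Ioi] with t ht
  rw [Real.norm_of_nonneg
    (mul_nonneg (Real.exp_pos _).le (sinh_div_cosh_sq_nonneg (Set.mem_Ioi.1 ht).le))]
  exact mul_le_of_le_one_right (Real.exp_pos _).le (sinh_div_cosh_sq_le_one t)

/-- The quantity `1 - (π / 2) * y * struveK0 y`, in the form obtained by integrating by parts in the
definition of `struveK0`, where its sign and monotonicity are visible. -/
noncomputable def struveRemainder (y : ℝ) : ℝ :=
  ∫ t in Set.Ioi (0 : ℝ), Real.exp (-y * Real.sinh t) * (Real.sinh t / Real.cosh t ^ 2)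

lemma struveRemainder_eq_one_sub {y : ℝ} (hy : 0 < y) :
    struveRemainder y = 1 - y * ∫ t in Set.Ioi (0 : ℝ), Real.exp (-y * Real.sinh t) := by
  have hderiv (t : ℝ) : HasDerivAt (fun s ↦ -Real.exp (-y * Real.sinh s) / Real.cosh s)
      (y * Real.exp (-y * Real.sinh t) +
        Real.exp (-y * Real.sinh t) * (Real.sinh t / Real.cosh t ^ 2)) t := by
    refine (((((Real.hasDerivAt_sinh t).const_mul (-y)).exp).neg).div (Real.hasDerivAt_cosh t)
      (Real.cosh_pos t).ne').congr_deriv ?_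
    simp only [Pi.neg_apply]
    field_simp
    ring
  have hexp : Tendsto (fun t ↦ Real.exp (-y * Real.sinh t)) atTop (𝓝 0) :=
    Real.tendsto_exp_atBot.comp (tendsto_sinh_atTop.const_mul_atTop_of_neg (neg_lt_zero.2 hy))
  have hint := (integrableOn_exp_neg_mul_sinh hy).const_mul y
  have hint' := integrableOn_exp_neg_mul_sinh_mul_sinh_div_cosh_sq hy
  have hftc := integral_Ioi_of_hasDerivAt_of_tendsto' (a := 0) (fun t _ ↦ hderiv t)
    (hint.add hint') (hexp.neg.div_atTop tendsto_cosh_atTop)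
  rw [integral_add hint hint', integral_const_mul, ← struveRemainder, Real.sinh_zero,
    Real.cosh_zero, mul_zero, Real.exp_zero] at hftc
  linear_combination hftc

lemma mul_struveK0_sub {x : ℝ} (hx : 0 < x) (u : ℝ) :
    x * struveK0 (2 * x * Real.cosh u) - 1 / (Real.pi * Real.cosh u) =
      -(1 / (Real.pi * Real.cosh u)) * struveRemainder (2 * x * Real.cosh u) := by
  rw [struveRemainder_eq_one_sub (by positivity), struveK0]
  field_simp
  ring

lemma struveRemainder_nonneg (y : ℝ) : 0 ≤ struveRemainder y :=
  setIntegral_nonneg measurableSet_Ioi fun _ ht ↦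
    mul_nonneg (Real.exp_pos _).le (sinh_div_cosh_sq_nonneg (Set.mem_Ioi.1 ht).le)

lemma antitoneOn_struveRemainder : AntitoneOn struveRemainder (Set.Ioi 0) := by
  intro y hy z hz hyz
  refine setIntegral_mono_on (integrableOn_exp_neg_mul_sinh_mul_sinh_div_cosh_sq hz)
    (integrableOn_exp_neg_mul_sinh_mul_sinh_div_cosh_sq hy) measurableSet_Ioi fun t ht ↦ ?_
  have hsinh := Real.sinh_pos_iff.2 ht
  have := sinh_div_cosh_sq_nonneg (Set.mem_Ioi.1 ht).le
  gcongr

lemma measurable_struveRemainder : Measurable struveRemainder := by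
  have hcont : Continuous fun z : ℝ × ℝ ↦
      Real.exp (-z.1 * Real.sinh z.2) * (Real.sinh z.2 / Real.cosh z.2 ^ 2) := by
    have := continuous_sinh_div_cosh_sq.comp (continuous_snd (X := ℝ))
    fun_prop
  exact hcont.stronglyMeasurable.integral_prod_right'.measurable

end StruveKernel

section SqrtIntegrals

lemma hasDerivAt_neg_inv_cosh_mul_add_sqrt {c C : ℝ} (hc : 0 < c) (hC : 0 < C) (t : ℝ) :
    HasDerivAt
      (fun s ↦ -(Real.cosh s * (c * Real.cosh s + √((c * Real.sinh s) ^ 2 + C ^ 2)))⁻¹)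
      (Real.sinh t / Real.cosh t ^ 2 / √((c * Real.sinh t) ^ 2 + C ^ 2)) t := by
  have hradicand : (c * Real.sinh t) ^ 2 + C ^ 2 ≠ 0 := by positivity
  set r := √((c * Real.sinh t) ^ 2 + C ^ 2) with hr
  have : 0 < r := by positivity
  have hr_deriv :=
    ((((Real.hasDerivAt_sinh t).const_mul c).pow 2).add_const (C ^ 2)).sqrt hradicand
  have hprod_deriv := (Real.hasDerivAt_cosh t).mul
    (((Real.hasDerivAt_cosh t).const_mul c).add hr_deriv)
  have hprod : Real.cosh t * (c * Real.cosh t + r) ≠ 0 := by positivity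
  refine (hprod_deriv.inv hprod).neg.congr_deriv ?_
  simp only [Pi.add_apply, Pi.mul_apply, Pi.pow_apply, ← hr]
  field_simp
  simp only [Nat.cast_ofNat, Nat.add_one_sub_one, pow_one]
  ring

lemma tendsto_neg_inv_cosh_mul_add_sqrt {c : ℝ} (hc : 0 < c) (C : ℝ) :
    Tendsto (fun t ↦ -(Real.cosh t * (c * Real.cosh t + √((c * Real.sinh t) ^ 2 + C ^ 2)))⁻¹)
      atTop (𝓝 0) := by
  have hfactor :
      Tendsto (fun t ↦ c * Real.cosh t + √((c * Real.sinh t) ^ 2 + C ^ 2)) atTop atTop :=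
    tendsto_atTop_mono (fun t ↦ le_add_of_nonneg_right (Real.sqrt_nonneg _))
      (tendsto_cosh_atTop.const_mul_atTop hc)
  simpa using (tendsto_inv_atTop_zero.comp (tendsto_cosh_atTop.atTop_mul_atTop₀ hfactor)).neg

lemma integrableOn_sinh_div_cosh_sq_div_sqrt {c C : ℝ} (hc : 0 < c) (hC : 0 < C) :
    IntegrableOn (fun t ↦ Real.sinh t / Real.cosh t ^ 2 / √((c * Real.sinh t) ^ 2 + C ^ 2))
      (Set.Ioi 0) :=
  integrableOn_Ioi_deriv_of_nonneg' (fun t _ ↦ hasDerivAt_neg_inv_cosh_mul_add_sqrt hc hC t)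
    (fun _ ht ↦ div_nonneg (sinh_div_cosh_sq_nonneg (Set.mem_Ioi.1 ht).le) (Real.sqrt_nonneg _))
    (tendsto_neg_inv_cosh_mul_add_sqrt hc C)

lemma integral_sinh_div_cosh_sq_div_sqrt {c C : ℝ} (hc : 0 < c) (hC : 0 < C) :
    ∫ t in Set.Ioi (0 : ℝ), Real.sinh t / Real.cosh t ^ 2 / √((c * Real.sinh t) ^ 2 + C ^ 2) =
      1 / (c + C) := by
  rw [integral_Ioi_of_hasDerivAt_of_tendsto'
    (fun t _ ↦ hasDerivAt_neg_inv_cosh_mul_add_sqrt hc hC t)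
    (integrableOn_sinh_div_cosh_sq_div_sqrt hc hC) (tendsto_neg_inv_cosh_mul_add_sqrt hc C)]
  simp [Real.sqrt_sq hC.le]

lemma cos_pos_of_mem_Ioo_zero {θ : ℝ} (hθ : θ ∈ Set.Ioo 0 (Real.pi / 2)) : 0 < Real.cos θ :=
  Real.cos_pos_of_mem_Ioo ⟨by linarith [hθ.1, Real.pi_pos], hθ.2⟩

lemma hasDerivAt_arctan_mul_tan_div_sqrt {p : ℝ} (hp : 0 < p) (B : ℝ) {θ : ℝ}
    (hθ : Real.cos θ ≠ 0) :
    HasDerivAt (fun φ ↦ Real.arctan (p * Real.tan φ / √(p ^ 2 + B ^ 2)) / √(p ^ 2 + B ^ 2))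
      (p / (p ^ 2 + B ^ 2 * Real.cos θ ^ 2)) θ := by
  set r := √(p ^ 2 + B ^ 2)
  have : 0 < r := Real.sqrt_pos.2 (by positivity)
  have hr_sq : r ^ 2 = p ^ 2 + B ^ 2 := Real.sq_sqrt (by positivity)
  have hden : r ^ 2 * Real.cos θ ^ 2 + p ^ 2 * Real.sin θ ^ 2 =
      p ^ 2 + B ^ 2 * Real.cos θ ^ 2 := by
    rw [hr_sq]
    linear_combination p ^ 2 * Real.sin_sq_add_cos_sq θ
  have harctan : 1 + (p * (Real.sin θ / Real.cos θ) / r) ^ 2 =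
      (p ^ 2 + B ^ 2 * Real.cos θ ^ 2) / (r ^ 2 * Real.cos θ ^ 2) := by
    rw [← hden]
    field_simp
  refine ((((Real.hasDerivAt_tan hθ).const_mul p).div_const r).arctan.div_const r).congr_deriv ?_
  rw [Real.tan_eq_sin_div_cos, harctan]
  field_simp

lemma continuous_div_sq_add_sq_mul_cos_sq {p : ℝ} (hp : 0 < p) (B : ℝ) :
    Continuous fun θ ↦ p / (p ^ 2 + B ^ 2 * Real.cos θ ^ 2) :=
  continuous_const.div (by fun_prop) fun θ ↦ by positivity

lemma integral_div_sq_add_sq_mul_cos_sq {p : ℝ} (hp : 0 < p) (B : ℝ) :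
    ∫ θ in (0 : ℝ)..(Real.pi / 2), p / (p ^ 2 + B ^ 2 * Real.cos θ ^ 2) =
      Real.pi / 2 / √(p ^ 2 + B ^ 2) := by
  have hr : 0 < √(p ^ 2 + B ^ 2) := Real.sqrt_pos.2 (by positivity)
  have hzero := (hasDerivAt_arctan_mul_tan_div_sqrt hp B (θ := 0) (by simp)).continuousAt.tendsto
  simp only [Real.tan_zero, mul_zero, zero_div, Real.arctan_zero] at hzero
  have htan := (Real.tendsto_tan_pi_div_two.const_mul_atTop hp).atTop_div_const hr
  have hpi := ((tendsto_nhds_of_tendsto_nhdsWithin Real.tendsto_arctan_atTop).comp htan).div_const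
    √(p ^ 2 + B ^ 2)
  rw [intervalIntegral.integral_eq_sub_of_hasDerivAt_of_tendsto Real.pi_div_two_pos
    (fun θ hθ ↦ hasDerivAt_arctan_mul_tan_div_sqrt hp B
      (cos_pos_of_mem_Ioo_zero hθ).ne')
    ((continuous_div_sq_add_sq_mul_cos_sq hp B).intervalIntegrable _ _)
    (hzero.mono_left nhdsWithin_le_nhds) hpi, sub_zero]

end SqrtIntegrals

section ExpSeries

/-- The sequence `d` is the coefficient sequence of an entire power series. -/
def IsEntireCoeff (d : ℕ → ℂ) : Prop := ∀ R : ℝ, 0 ≤ R → Summable fun k ↦ ‖d k‖ * R ^ k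

/-- The Frobenius series with exponent `μ` and coefficients `d`, that is `∑ d k x ^ (μ + 2 k)`,
in the variable `t = log x`, in which differentiation acts diagonally on the coefficients. -/
noncomputable def expSeries (d : ℕ → ℂ) (μ : ℂ) (t : ℝ) : ℂ :=
  ∑' k : ℕ, d k * Complex.exp ((μ + 2 * k) * t)

variable {d : ℕ → ℂ}

lemma IsEntireCoeff.mul_add_two_mul (hd : IsEntireCoeff d) (μ : ℂ) :
    IsEntireCoeff fun k ↦ d k * (μ + 2 * k) := by
  intro R hR
  have hfactor (k : ℕ) : ‖μ + 2 * (k : ℂ)‖ ≤ (‖μ‖ + 2) * 2 ^ k := by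
    have hk : (k : ℝ) + 1 ≤ 2 ^ k := by exact_mod_cast Nat.lt_two_pow_self (n := k)
    calc ‖μ + 2 * (k : ℂ)‖ ≤ ‖μ‖ + 2 * k := (norm_add_le _ _).trans (by simp)
      _ ≤ (‖μ‖ + 2) * (k + 1) := by nlinarith [norm_nonneg μ, k.cast_nonneg (α := ℝ)]
      _ ≤ (‖μ‖ + 2) * 2 ^ k := by gcongr
  refine Summable.of_nonneg_of_le (fun k ↦ by positivity) (fun k ↦ ?_)
    ((hd (2 * R) (by positivity)).mul_left (‖μ‖ + 2))
  calc ‖d k * (μ + 2 * k)‖ * R ^ k ≤ ‖d k‖ * ((‖μ‖ + 2) * 2 ^ k) * R ^ k := by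
        rw [norm_mul]
        gcongr
        exact hfactor k
    _ = (‖μ‖ + 2) * (‖d k‖ * (2 * R) ^ k) := by rw [mul_pow]; ring

lemma IsEntireCoeff.succ (hd : IsEntireCoeff d) : IsEntireCoeff fun k ↦ d (k + 1) := by
  intro R hR
  have htail := (summable_nat_add_iff 1).2 (hd (R + 1) (by positivity))
  refine Summable.of_nonneg_of_le (fun k ↦ by positivity) (fun k ↦ ?_) htail
  gcongr
  calc R ^ k ≤ (R + 1) ^ k := by gcongr; linarith
    _ ≤ (R + 1) ^ (k + 1) := pow_le_pow_right₀ (by linarith) k.le_succ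

lemma norm_expSeries_term (d : ℕ → ℂ) (μ : ℂ) (t : ℝ) (k : ℕ) :
    ‖d k * Complex.exp ((μ + 2 * k) * t)‖ =
      Real.exp (μ.re * t) * (‖d k‖ * Real.exp (2 * t) ^ k) := by
  rw [norm_mul, Complex.norm_exp, ← Real.exp_nat_mul, mul_left_comm, ← Real.exp_add]
  congr 2
  simp
  ring

lemma summable_expSeries (hd : IsEntireCoeff d) (μ : ℂ) (t : ℝ) :
    Summable fun k : ℕ ↦ d k * Complex.exp ((μ + 2 * k) * t) := by
  refine Summable.of_norm ?_
  simp_rw [norm_expSeries_term]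
  exact (hd _ (Real.exp_pos _).le).mul_left _

lemma hasDerivAt_expSeries (hd : IsEntireCoeff d) (μ : ℂ) (t : ℝ) :
    HasDerivAt (expSeries d μ) (expSeries (fun k ↦ d k * (μ + 2 * k)) μ t) t := by
  refine hasDerivAt_tsum_of_isPreconnected (𝕜 := ℝ) (t := Metric.ball t 1) (y₀ := t)
    (u := fun k ↦ Real.exp (|μ.re| * (|t| + 1)) *
      (‖d k * (μ + 2 * k)‖ * Real.exp (2 * (t + 1)) ^ k))
    (g := fun (k : ℕ) (s : ℝ) ↦ d k * Complex.exp ((μ + 2 * k) * s))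
    (g' := fun (k : ℕ) (s : ℝ) ↦ d k * (μ + 2 * k) * Complex.exp ((μ + 2 * k) * s))
    ((hd.mul_add_two_mul μ _ (Real.exp_pos _).le).mul_left _) Metric.isOpen_ball
    (convex_ball t 1).isPreconnected (fun k s _ ↦ ?_) (fun k s hs ↦ ?_)
    (Metric.mem_ball_self one_pos) (summable_expSeries hd μ t) (Metric.mem_ball_self one_pos)
  · exact ((hasDerivAt_exp_mul_ofReal (μ + 2 * k) s).const_mul (d k)).congr_deriv
      (mul_assoc _ _ _).symm
  · rw [Metric.mem_ball, Real.dist_eq] at hs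
    have hst : s ≤ t + 1 := by linarith [le_abs_self (s - t)]
    have habs : |s| ≤ |t| + 1 := by linarith [abs_sub_abs_le_abs_sub s t]
    have hre : μ.re * s ≤ |μ.re| * (|t| + 1) :=
      (le_abs_self _).trans ((abs_mul _ _).trans_le (by gcongr))
    rw [norm_expSeries_term fun k ↦ d k * (μ + 2 * k)]
    gcongr

lemma norm_expSeries_le (hd : IsEntireCoeff d) (μ : ℂ) {t : ℝ} (ht : t ≤ 0) :
    ‖expSeries d μ t‖ ≤ Real.exp (μ.re * t) * ∑' k, ‖d k‖ := by
  have hsum : Summable fun k ↦ ‖d k‖ := by simpa using hd 1 zero_le_one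
  refine tsum_of_norm_bounded (hsum.hasSum.mul_left _) fun k ↦ ?_
  rw [norm_expSeries_term]
  have : Real.exp (2 * t) ^ k ≤ 1 :=
    pow_le_one₀ (Real.exp_pos _).le (Real.exp_le_one_iff.2 (by linarith))
  gcongr
  exact mul_le_of_le_one_right (norm_nonneg _) this

lemma expSeries_eq_zero_add (hd : IsEntireCoeff d) (μ : ℂ) (t : ℝ) :
    expSeries d μ t = d 0 * Complex.exp (μ * t) +
      Real.exp (2 * t) * expSeries (fun k ↦ d (k + 1)) μ t := by
  rw [expSeries, (summable_expSeries hd μ t).tsum_eq_zero_add, expSeries, ← tsum_mul_left]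
  congr 1
  · simp
  · congr 1 with k
    rw [Complex.ofReal_exp, mul_left_comm, ← Complex.exp_add]
    congr 2
    push_cast
    ring

end ExpSeries

section BesselEquation

/-- The coefficients of the power series `∑ besselCoeff μ k * (x / 2) ^ (μ + 2 * k)` of `J_μ`.
They vanish where `1 / Γ` does, as `Complex.Gamma` takes the value `0` at its poles. -/
noncomputable def besselCoeff (μ : ℂ) (k : ℕ) : ℂ :=
  (-1) ^ k / ((Nat.factorial k : ℂ) * Complex.Gamma (μ + k + 1))

lemma besselCoeff_succ_mul (μ : ℂ) (k : ℕ) :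
    besselCoeff μ (k + 1) * ((k + 1) * (μ + k + 1)) = -besselCoeff μ k := by
  have hGamma := Complex.one_div_Gamma_eq_self_mul_one_div_Gamma_add_one (μ + k + 1)
  have hk : (k : ℂ) + 1 ≠ 0 := by exact_mod_cast k.succ_ne_zero
  rw [besselCoeff, besselCoeff, Nat.factorial_succ, div_eq_mul_inv, div_eq_mul_inv, mul_inv,
    mul_inv, hGamma, pow_succ]
  push_cast
  field_simp
  ring_nf

lemma isEntireCoeff_besselCoeff (μ : ℂ) : IsEntireCoeff (besselCoeff μ) := by
  intro R hR
  refine summable_of_ratio_norm_eventually_le (r := 1 / 2) (by norm_num) ?_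
  filter_upwards [eventually_ge_atTop ⌈2 * R + ‖μ‖⌉₊] with k hk
  have hk : 2 * R + ‖μ‖ ≤ k := Nat.ceil_le.1 hk
  have hfactor : 1 ≤ ‖μ + k + 1‖ := by
    have htriangle := norm_sub_le (μ + k + 1) μ
    rw [show μ + k + 1 - μ = (k + 1 : ℕ) by push_cast; ring, Complex.norm_natCast] at htriangle
    push_cast at htriangle
    linarith
  have hrec : ‖besselCoeff μ (k + 1)‖ * ((k + 1) * ‖μ + k + 1‖) = ‖besselCoeff μ k‖ := by
    rw [← norm_neg (besselCoeff μ k), ← besselCoeff_succ_mul, norm_mul, norm_mul]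
    norm_cast
  have hratio : R ≤ 1 / 2 * ((k + 1) * ‖μ + k + 1‖) := by
    nlinarith [norm_nonneg μ, k.cast_nonneg (α := ℝ)]
  rw [Real.norm_of_nonneg (by positivity), Real.norm_of_nonneg (by positivity), ← hrec, pow_succ]
  calc ‖besselCoeff μ (k + 1)‖ * (R ^ k * R)
      ≤ ‖besselCoeff μ (k + 1)‖ * (R ^ k * (1 / 2 * ((k + 1) * ‖μ + k + 1‖))) := by gcongr
    _ = 1 / 2 * (‖besselCoeff μ (k + 1)‖ * ((k + 1) * ‖μ + k + 1‖) * R ^ k) := by ring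

/-- The function `t ↦ J_μ (2 * exp t)`: in the variable `t` Bessel's equation has no first-order
term. -/
noncomputable def besselJExp (μ : ℂ) : ℝ → ℂ := expSeries (besselCoeff μ) μ

/-- The derivative of `besselJExp μ`. -/
noncomputable def besselJExpDeriv (μ : ℂ) : ℝ → ℂ :=
  expSeries (fun k ↦ besselCoeff μ k * (μ + 2 * k)) μ

lemma besselJ_eq_besselJExp_log (μ : ℂ) (x : ℝ) :
    besselJ μ x = besselJExp μ (Real.log (x / 2)) :=
  tsum_congr fun _ ↦ mul_div_right_comm _ _ _

lemma hasDerivAt_besselJExp (μ : ℂ) (t : ℝ) :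
    HasDerivAt (besselJExp μ) (besselJExpDeriv μ t) t :=
  hasDerivAt_expSeries (isEntireCoeff_besselCoeff μ) μ t

lemma hasDerivAt_besselJExpDeriv (μ : ℂ) (t : ℝ) :
    HasDerivAt (besselJExpDeriv μ) ((μ ^ 2 - 4 * Real.exp (2 * t)) * besselJExp μ t) t := by
  have hentire := isEntireCoeff_besselCoeff μ
  have hentire' := hentire.mul_add_two_mul μ
  have hrec (k : ℕ) : besselCoeff μ (k + 1) * (μ + 2 * (k + 1 : ℕ)) * (μ + 2 * (k + 1 : ℕ)) =
      μ ^ 2 * besselCoeff μ (k + 1) - 4 * besselCoeff μ k := by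
    push_cast
    linear_combination 4 * besselCoeff_succ_mul μ k
  refine (hasDerivAt_expSeries hentire' μ t).congr_deriv ?_
  have htail : expSeries (fun k ↦ besselCoeff μ (k + 1) * (μ + 2 * (k + 1 : ℕ)) *
      (μ + 2 * (k + 1 : ℕ))) μ t =
      μ ^ 2 * expSeries (fun k ↦ besselCoeff μ (k + 1)) μ t - 4 * besselJExp μ t := by
    simp_rw [hrec, expSeries, sub_mul, mul_assoc]
    rw [((summable_expSeries hentire.succ μ t).mul_left _).tsum_sub
      ((summable_expSeries hentire μ t).mul_left _), tsum_mul_left, tsum_mul_left]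
    rfl
  rw [expSeries_eq_zero_add (hentire'.mul_add_two_mul μ), htail]
  have hzero : besselJExp μ t = _ := expSeries_eq_zero_add hentire μ t
  linear_combination -μ ^ 2 * hzero

lemma exists_norm_besselJExp_sub_le (μ : ℂ) : ∃ K : ℝ, ∀ t : ℝ, t ≤ 0 →
    ‖besselJExp μ t - Complex.exp (μ * t) / Complex.Gamma (μ + 1)‖ ≤
      K * Real.exp ((μ.re + 2) * t) := by
  have hentire := isEntireCoeff_besselCoeff μ
  refine ⟨∑' k, ‖besselCoeff μ (k + 1)‖, fun t ht ↦ ?_⟩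
  have hlead : besselCoeff μ 0 = (Complex.Gamma (μ + 1))⁻¹ := by simp [besselCoeff]
  rw [besselJExp, expSeries_eq_zero_add hentire, hlead, inv_mul_eq_div, add_sub_cancel_left,
    norm_mul, Complex.norm_real, Real.norm_of_nonneg (Real.exp_pos _).le]
  calc Real.exp (2 * t) * ‖expSeries (fun k ↦ besselCoeff μ (k + 1)) μ t‖
      ≤ Real.exp (2 * t) * (Real.exp (μ.re * t) * ∑' k, ‖besselCoeff μ (k + 1)‖) := by
        gcongr
        exact norm_expSeries_le hentire.succ μ ht
    _ = (∑' k, ‖besselCoeff μ (k + 1)‖) * Real.exp ((μ.re + 2) * t) := by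
        rw [add_mul, Real.exp_add]
        ring

end BesselEquation

section BesselBounds

variable {μ : ℂ}

/-- The Sonin energy of `besselJExp μ` for purely imaginary `μ`, when Bessel's equation reads
`y'' = -(μ.im ^ 2 + 4 * exp (2 * t)) * y`. -/
noncomputable def besselEnergy (μ : ℂ) (t : ℝ) : ℝ :=
  ‖besselJExp μ t‖ ^ 2 + ‖besselJExpDeriv μ t‖ ^ 2 / (μ.im ^ 2 + 4 * Real.exp (2 * t))

lemma hasDerivAt_besselEnergy (hμ : μ.re = 0) (t : ℝ) :
    HasDerivAt (besselEnergy μ) (-(8 * Real.exp (2 * t) * ‖besselJExpDeriv μ t‖ ^ 2 /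
      (μ.im ^ 2 + 4 * Real.exp (2 * t)) ^ 2)) t := by
  have hfreq : μ.im ^ 2 + 4 * Real.exp (2 * t) ≠ 0 := by positivity
  have hfreq_deriv : HasDerivAt (fun s ↦ μ.im ^ 2 + 4 * Real.exp (2 * s))
      (8 * Real.exp (2 * t)) t := by
    refine ((((hasDerivAt_id t).const_mul 2).exp.const_mul 4).const_add (μ.im ^ 2)).congr_deriv ?_
    simp only [id_eq]
    ring
  have hcoeff : μ ^ 2 - 4 * Real.exp (2 * t) =
      ((-(μ.im ^ 2 + 4 * Real.exp (2 * t)) : ℝ) : ℂ) := by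
    apply Complex.ext <;> simp [pow_two, hμ, -Complex.ofReal_exp]; ring
  refine ((hasDerivAt_besselJExp μ t).norm_sq.add
    ((hasDerivAt_besselJExpDeriv μ t).norm_sq.div hfreq_deriv hfreq)).congr_deriv ?_
  rw [hcoeff, ← Complex.real_smul, inner_smul_right, real_inner_comm]
  field_simp
  ring

lemma antitone_besselEnergy (hμ : μ.re = 0) : Antitone (besselEnergy μ) :=
  antitone_of_hasDerivAt_nonpos (hasDerivAt_besselEnergy hμ)
    fun t ↦ neg_nonpos.2 (by positivity)

lemma norm_besselJExp_le_sqrt_besselEnergy (μ : ℂ) (t : ℝ) :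
    ‖besselJExp μ t‖ ≤ √(besselEnergy μ t) :=
  Real.le_sqrt_of_sq_le (le_add_of_nonneg_right (by positivity))

lemma norm_besselJExpDeriv_le_sqrt_besselEnergy_mul (μ : ℂ) (t : ℝ) :
    ‖besselJExpDeriv μ t‖ ≤ √(besselEnergy μ t) * (|μ.im| + 2 * Real.exp t) := by
  have hfreq : μ.im ^ 2 + 4 * Real.exp (2 * t) ≤ (|μ.im| + 2 * Real.exp t) ^ 2 := by
    have hcross : 0 ≤ |μ.im| * Real.exp t := by positivity
    rw [show 2 * t = t + t by ring, Real.exp_add, ← sq_abs μ.im]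
    nlinarith
  have henergy : ‖besselJExpDeriv μ t‖ ^ 2 ≤
      besselEnergy μ t * (μ.im ^ 2 + 4 * Real.exp (2 * t)) := by
    rw [← div_le_iff₀ (by positivity)]
    exact le_add_of_nonneg_left (by positivity)
  have hnonneg : 0 ≤ besselEnergy μ t := by unfold besselEnergy; positivity
  refine le_of_sq_le_sq ?_ (by positivity)
  rw [mul_pow, Real.sq_sqrt hnonneg]
  exact henergy.trans (by gcongr)

lemma exists_norm_besselJExp_le (hμ : μ.re = 0) : ∃ K, ∀ t, ‖besselJExp μ t‖ ≤ K := by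
  refine ⟨max (∑' k, ‖besselCoeff μ k‖) √(besselEnergy μ 0), fun t ↦ ?_⟩
  rcases le_total t 0 with ht | ht
  · exact le_max_of_le_left
      (by simpa [hμ, besselJExp] using norm_expSeries_le (isEntireCoeff_besselCoeff μ) μ ht)
  · exact le_max_of_le_right ((norm_besselJExp_le_sqrt_besselEnergy μ t).trans
      (Real.sqrt_le_sqrt (antitone_besselEnergy hμ ht)))

lemma exists_norm_besselJExpDeriv_le (hμ : μ.re = 0) :
    ∃ K, ∀ t, ‖besselJExpDeriv μ t‖ ≤ K * (1 + Real.exp t) := by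
  refine ⟨∑' k, ‖besselCoeff μ k * (μ + 2 * k)‖ + √(besselEnergy μ 0) * (|μ.im| + 2),
    fun t ↦ ?_⟩
  have hsum : 0 ≤ ∑' k, ‖besselCoeff μ k * (μ + 2 * k)‖ := tsum_nonneg fun _ ↦ norm_nonneg _
  rcases le_total t 0 with ht | ht
  · have hnear : ‖besselJExpDeriv μ t‖ ≤ ∑' k, ‖besselCoeff μ k * (μ + 2 * k)‖ := by
      simpa [hμ, besselJExpDeriv] using norm_expSeries_le
        ((isEntireCoeff_besselCoeff μ).mul_add_two_mul μ) μ ht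
    exact (le_add_of_le_of_nonneg hnear (by positivity)).trans
      (le_mul_of_one_le_right (by positivity) (by linarith [Real.exp_pos t]))
  · calc ‖besselJExpDeriv μ t‖ ≤ √(besselEnergy μ t) * (|μ.im| + 2 * Real.exp t) :=
          norm_besselJExpDeriv_le_sqrt_besselEnergy_mul μ t
      _ ≤ √(besselEnergy μ 0) * ((|μ.im| + 2) * (1 + Real.exp t)) := by
          gcongr
          · exact antitone_besselEnergy hμ ht
          · nlinarith [mul_nonneg (abs_nonneg μ.im) (Real.exp_pos t).le]
      _ ≤ _ := by
          rw [← mul_assoc]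
          gcongr
          exact le_add_of_nonneg_left hsum

lemma exists_norm_besselJ_le (hμ : μ.re = 0) : ∃ K, ∀ x, ‖besselJ μ x‖ ≤ K := by
  obtain ⟨K, hK⟩ := exists_norm_besselJExp_le hμ
  exact ⟨K, fun x ↦ besselJ_eq_besselJExp_log μ x ▸ hK _⟩

lemma exists_norm_besselJ_sub_le (hμ : μ.re = 0) : ∃ K, ∀ x : ℝ, 0 < x →
    ‖besselJ μ x - Complex.exp (μ * Real.log (x / 2)) / Complex.Gamma (μ + 1)‖ ≤ K * x := by
  obtain ⟨K₀, hK₀⟩ := exists_norm_besselJExp_sub_le μ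
  obtain ⟨K₁, hK₁⟩ := exists_norm_besselJ_le hμ
  refine ⟨|K₀| + K₁ + ‖Complex.Gamma (μ + 1)‖⁻¹, fun x hx ↦ ?_⟩
  have hK₁_nonneg : 0 ≤ K₁ := (norm_nonneg _).trans (hK₁ 0)
  have hG : 0 ≤ ‖Complex.Gamma (μ + 1)‖⁻¹ := by positivity
  rcases le_total (x / 2) 1 with hsmall | hlarge
  · have hnear := hK₀ _ (Real.log_nonpos (by positivity) hsmall)
    rw [hμ, zero_add, mul_comm 2, Real.exp_mul, Real.exp_log (by positivity), Real.rpow_two,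
      ← besselJ_eq_besselJExp_log] at hnear
    calc _ ≤ K₀ * (x / 2) ^ 2 := hnear
      _ ≤ |K₀| * x := by gcongr; exacts [le_abs_self _, by nlinarith]
      _ ≤ _ := by gcongr; linarith
  · calc _ ≤ K₁ + ‖Complex.Gamma (μ + 1)‖⁻¹ := by
          refine (norm_sub_le _ _).trans (add_le_add (hK₁ x) ?_)
          rw [norm_div, norm_exp_mul_ofReal_of_re_eq_zero hμ, one_div]
      _ ≤ (|K₀| + K₁ + ‖Complex.Gamma (μ + 1)‖⁻¹) * x := by nlinarith [abs_nonneg K₀]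

lemma hasDerivAt_log_div_two {x : ℝ} (hx : 0 < x) :
    HasDerivAt (fun y : ℝ ↦ Real.log (y / 2)) (1 / x) x := by
  refine (((hasDerivAt_id x).div_const 2).log (by positivity)).congr_deriv ?_
  simp only [id_eq]
  field_simp

lemma hasDerivAt_besselJ (μ : ℂ) {x : ℝ} (hx : 0 < x) :
    HasDerivAt (besselJ μ) (besselJExpDeriv μ (Real.log (x / 2)) / x) x := by
  rw [funext (besselJ_eq_besselJExp_log μ)]
  refine ((hasDerivAt_besselJExp μ _).scomp x (hasDerivAt_log_div_two hx)).congr_deriv ?_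
  rw [Complex.real_smul]
  push_cast
  ring

lemma hasDerivAt_besselJExpDeriv_log (μ : ℂ) {x : ℝ} (hx : 0 < x) :
    HasDerivAt (fun y : ℝ ↦ besselJExpDeriv μ (Real.log (y / 2)))
      ((μ ^ 2 - x ^ 2) * besselJ μ x / x) x := by
  refine ((hasDerivAt_besselJExpDeriv μ _).scomp x (hasDerivAt_log_div_two hx)).congr_deriv ?_
  have hexp : 4 * Real.exp (2 * Real.log (x / 2)) = x ^ 2 := by
    rw [mul_comm 2, Real.exp_mul, Real.exp_log (by positivity), Real.rpow_two]
    ring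
  rw [Complex.real_smul, ← Complex.ofReal_ofNat 4, ← Complex.ofReal_mul, hexp,
    besselJ_eq_besselJExp_log]
  push_cast
  ring

lemma continuousOn_besselJ (μ : ℂ) : ContinuousOn (besselJ μ) (Set.Ioi 0) :=
  fun _ hx ↦ (hasDerivAt_besselJ μ hx).continuousAt.continuousWithinAt

end BesselBounds

section Laplace

variable {μ : ℂ} {p : ℝ}

lemma integrableOn_pow_mul_exp_neg_mul (k : ℕ) (hp : 0 < p) :
    IntegrableOn (fun x : ℝ ↦ x ^ k * Real.exp (-p * x)) (Set.Ioi 0) := by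
  simpa using integrableOn_rpow_mul_exp_neg_mul_rpow (s := k) (p := 1)
    (neg_one_lt_zero.trans_le k.cast_nonneg) one_pos hp

lemma tendsto_pow_mul_exp_neg_mul_atTop (k : ℕ) (hp : 0 < p) :
    Tendsto (fun x : ℝ ↦ x ^ k * Real.exp (-p * x)) atTop (𝓝 0) := by
  simpa using tendsto_rpow_mul_exp_neg_mul_atTop_nhds_zero k p hp

/-- The Laplace transform of `x ^ k * besselJ μ x`, that is, `(-1) ^ k` times the `k`-th derivative
of the Laplace transform of `besselJ μ`. -/
noncomputable def besselLaplace (k : ℕ) (μ : ℂ) (p : ℝ) : ℂ :=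
  ∫ x in Set.Ioi (0 : ℝ), ((x ^ k * Real.exp (-p * x) : ℝ) : ℂ) * besselJ μ x

lemma integrableOn_pow_mul_exp_neg_mul_besselJ (k : ℕ) (hμ : μ.re = 0) (hp : 0 < p) :
    IntegrableOn (fun x : ℝ ↦ ((x ^ k * Real.exp (-p * x) : ℝ) : ℂ) * besselJ μ x)
      (Set.Ioi 0) := by
  obtain ⟨K, hK⟩ := exists_norm_besselJ_le hμ
  exact (integrableOn_pow_mul_exp_neg_mul k hp).ofReal.mul_bdd (c := K)
    ((continuousOn_besselJ μ).aestronglyMeasurable measurableSet_Ioi) (.of_forall hK)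

lemma hasDerivAt_besselLaplace (k : ℕ) (hμ : μ.re = 0) (hp : 0 < p) :
    HasDerivAt (besselLaplace k μ) (-besselLaplace (k + 1) μ p) p := by
  obtain ⟨K, hK⟩ := exists_norm_besselJ_le hμ
  have hderiv (q x : ℝ) : HasDerivAt
      (fun q : ℝ ↦ ((x ^ k * Real.exp (-q * x) : ℝ) : ℂ) * besselJ μ x)
      (-(((x ^ (k + 1) * Real.exp (-q * x) : ℝ) : ℂ) * besselJ μ x)) q := by
    have hexp := (((hasDerivAt_id q).neg.mul_const x).exp).const_mul (x ^ k)
    refine (hexp.ofReal_comp.mul_const (besselJ μ x)).congr_deriv ?_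
    simp only [Pi.neg_apply, id_eq]
    push_cast
    ring
  have hbound : ∀ᵐ x ∂volume.restrict (Set.Ioi (0 : ℝ)), ∀ q ∈ Set.Ioi (p / 2),
      ‖-(((x ^ (k + 1) * Real.exp (-q * x) : ℝ) : ℂ) * besselJ μ x)‖ ≤
        x ^ (k + 1) * Real.exp (-(p / 2) * x) * K := by
    filter_upwards [ae_restrict_mem measurableSet_Ioi] with x (hx : 0 < x) q (hq : p / 2 < q)
    rw [norm_neg, norm_mul, Complex.norm_of_nonneg (by positivity)]
    gcongr
    exact hK x
  have hmain := (hasDerivAt_integral_of_dominated_loc_of_deriv_le (𝕜 := ℝ)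
    (Ioi_mem_nhds (half_lt_self hp))
    ((eventually_gt_nhds hp).mono fun q hq ↦ (integrableOn_pow_mul_exp_neg_mul_besselJ k hμ hq).1)
    (integrableOn_pow_mul_exp_neg_mul_besselJ k hμ hp)
    (integrableOn_pow_mul_exp_neg_mul_besselJ (k + 1) hμ hp).neg.1 hbound
    ((integrableOn_pow_mul_exp_neg_mul (k + 1) (half_pos hp)).mul_const K)
    (.of_forall fun x q _ ↦ hderiv q x)).2
  exact hmain.congr_deriv (integral_neg _)

/-- The boundary term in the integration by parts which turns Bessel's equation for `besselJ μ` into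
a differential equation for its Laplace transform at `p`. -/
noncomputable def besselLaplaceBoundary (μ : ℂ) (p x : ℝ) : ℂ :=
  Real.exp (-p * x) *
    ((x - p * x ^ 2) * besselJ μ x - x * besselJExpDeriv μ (Real.log (x / 2)))

lemma hasDerivAt_besselLaplaceBoundary (μ : ℂ) (p : ℝ) {x : ℝ} (hx : 0 < x) :
    HasDerivAt (besselLaplaceBoundary μ p)
      ((1 + (p : ℂ) ^ 2) * (((x ^ 2 * Real.exp (-p * x) : ℝ) : ℂ) * besselJ μ x)
        - 3 * p * (((x ^ 1 * Real.exp (-p * x) : ℝ) : ℂ) * besselJ μ x)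
        + (1 - μ ^ 2) * (((x ^ 0 * Real.exp (-p * x) : ℝ) : ℂ) * besselJ μ x)) x := by
  have hexp := ((hasDerivAt_id x).const_mul (-p)).exp
  have hid : HasDerivAt (fun x : ℝ ↦ (x : ℂ)) 1 x := Complex.ofRealCLM.hasDerivAt
  have hpoly := hid.sub ((hid.pow 2).const_mul (p : ℂ))
  refine (hexp.ofReal_comp.mul ((hpoly.mul (hasDerivAt_besselJ μ hx)).sub
    (hid.mul (hasDerivAt_besselJExpDeriv_log μ hx)))).congr_deriv ?_
  have hx' : (x : ℂ) ≠ 0 := mod_cast hx.ne'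
  simp only [Pi.mul_apply, Pi.sub_apply, Pi.pow_apply, id_eq]
  push_cast
  field_simp
  ring

lemma exists_norm_besselLaplaceBoundary_le (hμ : μ.re = 0) (p : ℝ) :
    ∃ a b : ℝ, ∀ x, 0 < x →
      ‖besselLaplaceBoundary μ p x‖ ≤
        a * (x ^ 1 * Real.exp (-p * x)) + b * (x ^ 2 * Real.exp (-p * x)) := by
  obtain ⟨K, hK⟩ := exists_norm_besselJ_le hμ
  obtain ⟨M, hM⟩ := exists_norm_besselJExpDeriv_le hμ
  refine ⟨K + M, |p| * K + M / 2, fun x hx ↦ ?_⟩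
  have hpoly : ‖(x : ℂ) - p * x ^ 2‖ ≤ x + |p| * x ^ 2 := by
    refine (norm_sub_le _ _).trans_eq ?_
    simp [abs_of_pos hx]
  have hderiv : ‖besselJExpDeriv μ (Real.log (x / 2))‖ ≤ M * (1 + x / 2) := by
    simpa [Real.exp_log (half_pos hx)] using hM (Real.log (x / 2))
  calc ‖besselLaplaceBoundary μ p x‖
      ≤ Real.exp (-p * x) * ((x + |p| * x ^ 2) * K + x * (M * (1 + x / 2))) := by
        rw [besselLaplaceBoundary, norm_mul, Complex.norm_of_nonneg (Real.exp_nonneg _)]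
        gcongr
        refine (norm_sub_le _ _).trans ?_
        rw [norm_mul, norm_mul, Complex.norm_of_nonneg hx.le]
        gcongr
        exact hK x
    _ = _ := by ring

lemma tendsto_besselLaplaceBoundary {l : Filter ℝ} (hμ : μ.re = 0) (hl : ∀ᶠ x in l, 0 < x)
    (hlim : ∀ k ≠ 0, Tendsto (fun x : ℝ ↦ x ^ k * Real.exp (-p * x)) l (𝓝 0)) :
    Tendsto (besselLaplaceBoundary μ p) l (𝓝 0) := by
  obtain ⟨a, b, hbound⟩ := exists_norm_besselLaplaceBoundary_le hμ p
  refine squeeze_zero_norm' (hl.mono hbound) ?_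
  simpa using ((hlim 1 one_ne_zero).const_mul a).add ((hlim 2 two_ne_zero).const_mul b)

lemma besselLaplace_ode (hμ : μ.re = 0) (hp : 0 < p) :
    (1 + p ^ 2) * besselLaplace 2 μ p - 3 * p * besselLaplace 1 μ p
      + (1 - μ ^ 2) * besselLaplace 0 μ p = 0 := by
  have hint (k : ℕ) := integrableOn_pow_mul_exp_neg_mul_besselJ k hμ hp
  have hboundary_zero : besselLaplaceBoundary μ p 0 = 0 := by simp [besselLaplaceBoundary]
  have hcont : ContinuousWithinAt (besselLaplaceBoundary μ p) (Set.Ici 0) 0 := by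
    rw [← continuousWithinAt_Ioi_iff_Ici, ContinuousWithinAt, hboundary_zero]
    refine tendsto_besselLaplaceBoundary hμ self_mem_nhdsWithin fun k hk ↦ ?_
    exact tendsto_nhdsWithin_of_tendsto_nhds (Continuous.tendsto' (by fun_prop) _ _ (by simp [hk]))
  have htop : Tendsto (besselLaplaceBoundary μ p) atTop (𝓝 0) :=
    tendsto_besselLaplaceBoundary hμ (eventually_gt_atTop 0)
      fun k _ ↦ tendsto_pow_mul_exp_neg_mul_atTop k hp
  have hint₂ := (hint 2).const_mul (1 + (p : ℂ) ^ 2)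
  have hint₁ := (hint 1).const_mul (3 * (p : ℂ))
  have hint₀ := (hint 0).const_mul (1 - μ ^ 2)
  have hparts := integral_Ioi_of_hasDerivAt_of_tendsto hcont
    (fun x hx ↦ hasDerivAt_besselLaplaceBoundary μ p hx) ((hint₂.sub hint₁).add hint₀) htop
  rwa [hboundary_zero, sub_zero, integral_add (by exact hint₂.sub hint₁) hint₀,
    integral_sub hint₂ hint₁, integral_const_mul, integral_const_mul, integral_const_mul] at hparts

end Laplace

section ConstantCoefficients

variable {a : ℂ}

lemma exists_eq_mul_exp_of_hasDerivAt {P : ℝ → ℂ}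
    (hP : ∀ ξ, 0 < ξ → HasDerivAt P (a * P ξ) ξ) :
    ∃ γ : ℂ, ∀ ξ : ℝ, 0 < ξ → P ξ = γ * Complex.exp (a * ξ) := by
  have hderiv (ξ : ℝ) (hξ : 0 < ξ) : HasDerivAt (fun ξ : ℝ ↦ P ξ * Complex.exp (-a * ξ)) 0 ξ :=
    ((hP ξ hξ).mul (hasDerivAt_exp_mul_ofReal (-a) ξ)).congr_deriv (by ring)
  refine ⟨P 1 * Complex.exp (-a * (1 : ℝ)), fun ξ hξ ↦ ?_⟩
  have hconst := isOpen_Ioi.is_const_of_deriv_eq_zero isPreconnected_Ioi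
    (fun t ht ↦ (hderiv t ht).differentiableAt.differentiableWithinAt)
    (fun t ht ↦ (hderiv t ht).deriv) (Set.mem_Ioi.2 hξ) (Set.mem_Ioi.2 one_pos)
  rw [← hconst, mul_assoc, ← Complex.exp_add]
  simp

lemma exists_two_mul_eq_exp_add_exp {H G : ℝ → ℂ} (hH : ∀ ξ, 0 < ξ → HasDerivAt H (G ξ) ξ)
    (hG : ∀ ξ, 0 < ξ → HasDerivAt G (a ^ 2 * H ξ) ξ) :
    ∃ α β : ℂ, ∀ ξ : ℝ, 0 < ξ →
      2 * a * H ξ = α * Complex.exp (a * ξ) + β * Complex.exp (-a * ξ) := by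
  obtain ⟨α, hα⟩ := exists_eq_mul_exp_of_hasDerivAt (a := a) (P := fun ξ ↦ G ξ + a * H ξ)
    fun ξ hξ ↦ ((hG ξ hξ).add ((hH ξ hξ).const_mul a)).congr_deriv (by ring)
  obtain ⟨β, hβ⟩ := exists_eq_mul_exp_of_hasDerivAt (a := -a) (P := fun ξ ↦ G ξ - a * H ξ)
    fun ξ hξ ↦ ((hG ξ hξ).sub ((hH ξ hξ).const_mul a)).congr_deriv (by ring)
  exact ⟨α, -β, fun ξ hξ ↦ by linear_combination hα ξ hξ - hβ ξ hξ⟩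

lemma eq_zero_and_eq_of_tendsto_mul_exp_add (hre : a.re = 0) (ha : a ≠ 0) {α β γ : ℂ}
    (h : Tendsto (fun ξ : ℝ ↦ α * Complex.exp (a * ξ) + β) atTop (𝓝 γ)) : α = 0 ∧ β = γ := by
  have him : (a.im : ℂ) ≠ 0 := mod_cast fun him ↦ ha (Complex.ext hre him)
  have haI : a = a.im * Complex.I := by simpa [hre] using (Complex.re_add_im a).symm
  have hshift (ξ : ℝ) : Complex.exp (a * (ξ + Real.pi / a.im : ℝ)) = -Complex.exp (a * ξ) := by
    have : a * (ξ + Real.pi / a.im : ℝ) = a * ξ + Real.pi * Complex.I := by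
      rw [haI, Complex.im_ofReal_mul, Complex.I_im, mul_one]
      push_cast
      field_simp
    rw [this, Complex.exp_add, Complex.exp_pi_mul_I, mul_neg_one]
  have hβ : β = γ := by
    have hsum := h.add (h.comp (tendsto_atTop_add_const_right _ (Real.pi / a.im) tendsto_id))
    simp only [Function.comp_def, id_eq, hshift] at hsum
    have := tendsto_nhds_unique (tendsto_const_nhds (x := 2 * β)) (hsum.congr fun ξ ↦ by ring)
    linear_combination this / 2
  have hα := (h.sub_const β).norm
  simp only [add_sub_cancel_right, norm_mul, norm_exp_mul_ofReal_of_re_eq_zero hre, mul_one, hβ,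
    sub_self, norm_zero] at hα
  exact ⟨norm_eq_zero.1 (tendsto_nhds_unique tendsto_const_nhds hα), hβ⟩

end ConstantCoefficients

section LaplaceFormula

variable {μ : ℂ}

/-- The Laplace transform of `besselJ μ` in the coordinate `ξ` given by `p = sinh ξ`, normalized so
that its differential equation has constant coefficients. -/
noncomputable def besselLaplaceSinh (μ : ℂ) (ξ : ℝ) : ℂ :=
  Real.cosh ξ * besselLaplace 0 μ (Real.sinh ξ)

lemma exists_two_mul_besselLaplaceSinh_eq (hμ : μ.re = 0) :
    ∃ α β : ℂ, ∀ ξ : ℝ, 0 < ξ → 2 * μ * besselLaplaceSinh μ ξ =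
      α * Complex.exp (μ * ξ) + β * Complex.exp (-μ * ξ) := by
  have hlaplace (k : ℕ) (ξ : ℝ) (hξ : 0 < ξ) :
      HasDerivAt (fun ξ ↦ besselLaplace k μ (Real.sinh ξ))
        (-(Real.cosh ξ * besselLaplace (k + 1) μ (Real.sinh ξ))) ξ := by
    refine ((hasDerivAt_besselLaplace k hμ (Real.sinh_pos_iff.2 hξ)).scomp ξ
      (Real.hasDerivAt_sinh ξ)).congr_deriv ?_
    rw [Complex.real_smul, mul_neg]
  refine exists_two_mul_eq_exp_add_exp (G := fun ξ ↦ Real.sinh ξ * besselLaplace 0 μ (Real.sinh ξ)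
    - Real.cosh ξ ^ 2 * besselLaplace 1 μ (Real.sinh ξ)) (fun ξ hξ ↦ ?_) fun ξ hξ ↦ ?_
  · refine ((Real.hasDerivAt_cosh ξ).ofReal_comp.mul (hlaplace 0 ξ hξ)).congr_deriv ?_
    ring
  · refine (((Real.hasDerivAt_sinh ξ).ofReal_comp.mul (hlaplace 0 ξ hξ)).sub
      (((Real.hasDerivAt_cosh ξ).ofReal_comp.pow 2).mul (hlaplace 1 ξ hξ))).congr_deriv ?_
    have hcosh : (Real.cosh ξ : ℂ) ^ 2 = Real.sinh ξ ^ 2 + 1 := mod_cast Real.cosh_sq ξ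
    have hode := besselLaplace_ode hμ (Real.sinh_pos_iff.2 hξ)
    simp only [besselLaplaceSinh, Pi.pow_apply]
    push_cast [-Complex.ofReal_cosh, -Complex.ofReal_sinh]
    linear_combination (Real.cosh ξ : ℂ) * hode
      + (Real.cosh ξ : ℂ) * besselLaplace 2 μ (Real.sinh ξ) * hcosh

lemma integral_exp_neg_mul_mul_exp_mul_log (hμ : -1 < μ.re) {p : ℝ} (hp : 0 < p) :
    ∫ x in Set.Ioi (0 : ℝ), (Real.exp (-p * x) : ℂ) *
      (Complex.exp (μ * Real.log (x / 2)) / Complex.Gamma (μ + 1)) =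
        Complex.exp (-μ * Real.log (2 * p)) / p := by
  have hre : 0 < (μ + 1).re := by simpa using neg_lt_iff_pos_add.1 hμ
  have hp' : (p : ℂ) ≠ 0 := mod_cast hp.ne'
  have hgamma := Complex.integral_cpow_mul_exp_neg_mul_Ioi (r := p) hre (by simpa using hp)
  have hcpow (x : ℝ) (hx : x ∈ Set.Ioi (0 : ℝ)) : (Real.exp (-p * x) : ℂ) *
      (Complex.exp (μ * Real.log (x / 2)) / Complex.Gamma (μ + 1)) =
        Complex.exp (-μ * Real.log 2) / Complex.Gamma (μ + 1) *
          ((x : ℂ) ^ (μ + 1 - 1) * Complex.exp (-(p * x))) := by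
    have hx₀ : x ≠ 0 := (Set.mem_Ioi.1 hx).ne'
    rw [add_sub_cancel_right, Complex.cpow_def_of_ne_zero (mod_cast hx₀),
      ← Complex.ofReal_log (Set.mem_Ioi.1 hx).le, Real.log_div hx₀ two_ne_zero,
      show μ * ((Real.log x - Real.log 2 : ℝ) : ℂ) = -μ * Real.log 2 + Real.log x * μ by
        push_cast; ring, Complex.exp_add]
    push_cast
    ring_nf
  rw [setIntegral_congr_fun measurableSet_Ioi hcpow, integral_const_mul, hgamma, one_div,
    Complex.cpow_add _ _ (inv_ne_zero hp'), Complex.cpow_one,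
    Complex.cpow_def_of_ne_zero (inv_ne_zero hp'), ← Complex.ofReal_inv,
    ← Complex.ofReal_log (by positivity), Real.log_inv, Real.log_mul two_ne_zero hp.ne',
    show -μ * ((Real.log 2 + Real.log p : ℝ) : ℂ) =
      -μ * Real.log 2 + ((-Real.log p : ℝ) : ℂ) * μ by push_cast; ring, Complex.exp_add]
  have := Complex.Gamma_ne_zero_of_re_pos hre
  push_cast
  field_simp

lemma integrableOn_exp_neg_mul_mul_exp_mul_log (hμ : μ.re = 0) {p : ℝ} (hp : 0 < p) :
    IntegrableOn (fun x : ℝ ↦ (Real.exp (-p * x) : ℂ) *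
      (Complex.exp (μ * Real.log (x / 2)) / Complex.Gamma (μ + 1))) (Set.Ioi 0) := by
  refine (exp_neg_integrableOn_Ioi 0 hp).ofReal.mul_bdd (c := 1 / ‖Complex.Gamma (μ + 1)‖) ?_
    (.of_forall fun x ↦ ?_)
  · refine ContinuousOn.aestronglyMeasurable (fun x hx ↦ ContinuousAt.continuousWithinAt ?_)
      measurableSet_Ioi
    have := (hasDerivAt_log_div_two hx).continuousAt
    fun_prop
  · rw [norm_div, norm_exp_mul_ofReal_of_re_eq_zero hμ]

lemma exists_norm_besselLaplace_sub_le (hμ : μ.re = 0) : ∃ K : ℝ, ∀ p : ℝ, 0 < p →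
    ‖besselLaplace 0 μ p - Complex.exp (-μ * Real.log (2 * p)) / p‖ ≤ K / p ^ 2 := by
  obtain ⟨K, hK⟩ := exists_norm_besselJ_sub_le hμ
  refine ⟨K, fun p hp ↦ ?_⟩
  have hbound : ∫ x in Set.Ioi (0 : ℝ), K * (x ^ 1 * Real.exp (-p * x)) = K / p ^ 2 := by
    have hgamma := Real.integral_rpow_mul_exp_neg_mul_Ioi (a := 2) two_pos hp
    norm_num at hgamma
    simp only [pow_one, neg_mul]
    rw [integral_const_mul, hgamma]
    ring
  rw [← integral_exp_neg_mul_mul_exp_mul_log (by simp [hμ]) hp, besselLaplace,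
    ← integral_sub (integrableOn_pow_mul_exp_neg_mul_besselJ 0 hμ hp)
      (integrableOn_exp_neg_mul_mul_exp_mul_log hμ hp), ← hbound]
  refine norm_integral_le_of_norm_le ((integrableOn_pow_mul_exp_neg_mul 1 hp).const_mul K) ?_
  filter_upwards [ae_restrict_mem measurableSet_Ioi] with x hx
  rw [pow_zero, one_mul, ← mul_sub, norm_mul, Complex.norm_of_nonneg (Real.exp_nonneg _), pow_one,
    ← mul_assoc, mul_comm _ (Real.exp _)]
  gcongr
  exact hK x hx

lemma tendsto_cosh_div_sinh_atTop :
    Tendsto (fun ξ ↦ Real.cosh ξ / Real.sinh ξ) atTop (𝓝 1) := by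
  have hlim := ((Real.tendsto_exp_neg_atTop_nhds_zero.mul
    (tendsto_inv_atTop_zero.comp tendsto_sinh_atTop)).const_add 1)
  rw [mul_zero, add_zero] at hlim
  refine hlim.congr' ?_
  filter_upwards [eventually_gt_atTop 0] with ξ hξ
  have := Real.sinh_pos_iff.2 hξ
  simp only [Function.comp_apply]
  rw [← Real.cosh_sub_sinh]
  field_simp
  ring

lemma tendsto_log_two_mul_sinh_sub_atTop :
    Tendsto (fun ξ ↦ Real.log (2 * Real.sinh ξ) - ξ) atTop (𝓝 0) := by
  have hexp := Real.tendsto_exp_neg_atTop_nhds_zero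
  have hlim := ((hexp.mul hexp).const_sub 1).log (by norm_num)
  simp only [mul_zero, sub_zero, Real.log_one] at hlim
  refine hlim.congr' ?_
  filter_upwards [eventually_gt_atTop 0] with ξ hξ
  have hsinh : 2 * Real.sinh ξ = Real.exp ξ * (1 - Real.exp (-ξ) * Real.exp (-ξ)) := by
    rw [Real.sinh_eq, mul_sub, ← mul_assoc, ← Real.exp_add]
    simp
    ring
  have hlt : Real.exp (-ξ) * Real.exp (-ξ) < 1 := by
    rw [← Real.exp_add, Real.exp_lt_one_iff]
    linarith
  rw [hsinh, Real.log_mul (Real.exp_ne_zero _) (sub_pos.2 hlt).ne', Real.log_exp,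
    add_sub_cancel_left]

lemma tendsto_exp_mul_besselLaplaceSinh (hμ : μ.re = 0) :
    Tendsto (fun ξ : ℝ ↦ Complex.exp (μ * ξ) * besselLaplaceSinh μ ξ) atTop (𝓝 1) := by
  obtain ⟨K, hK⟩ := exists_norm_besselLaplace_sub_le hμ
  have herror : Tendsto (fun ξ : ℝ ↦ Complex.exp (μ * ξ) * Real.cosh ξ *
      (besselLaplace 0 μ (Real.sinh ξ) -
        Complex.exp (-μ * Real.log (2 * Real.sinh ξ)) / Real.sinh ξ)) atTop (𝓝 0) := by
    have hbound := (tendsto_cosh_div_sinh_atTop.const_mul K).mul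
      (tendsto_inv_atTop_zero.comp tendsto_sinh_atTop)
    rw [mul_zero] at hbound
    refine squeeze_zero_norm' ?_ hbound
    filter_upwards [eventually_gt_atTop 0] with ξ hξ
    rw [norm_mul, norm_mul, norm_exp_mul_ofReal_of_re_eq_zero hμ,
      Complex.norm_of_nonneg (Real.cosh_pos ξ).le, one_mul]
    refine (mul_le_mul_of_nonneg_left (hK _ (Real.sinh_pos_iff.2 hξ))
      (Real.cosh_pos ξ).le).trans_eq ?_
    simp only [Function.comp_apply]
    field_simp
  have hleading : Tendsto (fun ξ : ℝ ↦ ((Real.cosh ξ / Real.sinh ξ : ℝ) : ℂ) *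
      Complex.exp (-μ * ((Real.log (2 * Real.sinh ξ) - ξ : ℝ) : ℂ))) atTop (𝓝 1) := by
    have hphase := (tendsto_log_two_mul_sinh_sub_atTop.ofReal.const_mul (-μ)).cexp
    simpa using tendsto_cosh_div_sinh_atTop.ofReal.mul hphase
  have hsum := herror.add hleading
  rw [zero_add] at hsum
  refine hsum.congr fun ξ ↦ ?_
  have hphase : Complex.exp (-μ * ((Real.log (2 * Real.sinh ξ) - ξ : ℝ) : ℂ)) =
      Complex.exp (μ * ξ) * Complex.exp (-μ * Real.log (2 * Real.sinh ξ)) := by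
    rw [← Complex.exp_add]
    push_cast
    ring_nf
  rw [hphase, Complex.ofReal_div, besselLaplaceSinh]
  ring

lemma cosh_mul_besselLaplace_sinh (hμ : μ.re = 0) (hμ₀ : μ ≠ 0) {ξ : ℝ} (hξ : 0 < ξ) :
    Real.cosh ξ * besselLaplace 0 μ (Real.sinh ξ) = Complex.exp (-μ * ξ) := by
  obtain ⟨α, β, hαβ⟩ := exists_two_mul_besselLaplaceSinh_eq hμ
  have hlim : Tendsto (fun ξ : ℝ ↦ α * Complex.exp (2 * μ * ξ) + β) atTop (𝓝 (2 * μ * 1)) := by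
    refine ((tendsto_exp_mul_besselLaplaceSinh hμ).const_mul (2 * μ)).congr' ?_
    filter_upwards [eventually_gt_atTop 0] with ξ hξ
    have hdouble : Complex.exp (2 * μ * ξ) = Complex.exp (μ * ξ) * Complex.exp (μ * ξ) := by
      rw [← Complex.exp_add]
      ring_nf
    have hinv : Complex.exp (μ * ξ) * Complex.exp (-μ * ξ) = 1 := by
      rw [← Complex.exp_add]
      simp
    linear_combination Complex.exp (μ * ξ) * hαβ ξ hξ - α * hdouble + β * hinv
  obtain ⟨rfl, rfl⟩ :=
    eq_zero_and_eq_of_tendsto_mul_exp_add (by simp [hμ]) (mul_ne_zero two_ne_zero hμ₀) hlim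
  refine mul_left_cancel₀ (mul_ne_zero two_ne_zero hμ₀) ((hαβ ξ hξ).trans ?_)
  ring

end LaplaceFormula

section BetaIntegral

lemma image_sin_sq_Ioo : (fun θ ↦ Real.sin θ ^ 2) '' Set.Ioo 0 (Real.pi / 2) = Set.Ioo 0 1 := by
  ext x
  constructor
  · rintro ⟨θ, hθ, rfl⟩
    have hsin := Real.sin_pos_of_pos_of_lt_pi hθ.1 (by linarith [hθ.2, Real.pi_pos])
    have hcos := cos_pos_of_mem_Ioo_zero hθ
    have hsum := Real.sin_sq_add_cos_sq θ
    constructor <;> simp only <;> nlinarith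
  · rintro ⟨h0, h1⟩
    have hsqrt : √x < 1 := (Real.sqrt_lt' one_pos).2 (by simpa using h1)
    refine ⟨Real.arcsin √x,
      ⟨Real.arcsin_pos.2 (Real.sqrt_pos.2 h0), Real.arcsin_lt_pi_div_two.2 hsqrt⟩, ?_⟩
    simp only
    rw [Real.sin_arcsin (by linarith [Real.sqrt_nonneg x]) hsqrt.le, Real.sq_sqrt h0.le]

lemma injOn_sin_sq_Ioo : Set.InjOn (fun θ ↦ Real.sin θ ^ 2) (Set.Ioo 0 (Real.pi / 2)) := by
  intro a ha b hb hab
  have hsin_nonneg {θ : ℝ} (hθ : θ ∈ Set.Ioo 0 (Real.pi / 2)) : 0 ≤ Real.sin θ :=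
    Real.sin_nonneg_of_nonneg_of_le_pi hθ.1.le (by linarith [hθ.2, Real.pi_pos])
  refine Real.injOn_sin ⟨by linarith [ha.1, Real.pi_pos], ha.2.le⟩
    ⟨by linarith [hb.1, Real.pi_pos], hb.2.le⟩ ?_
  exact (pow_left_inj₀ (hsin_nonneg ha) (hsin_nonneg hb) two_ne_zero).1 hab

lemma ofReal_mul_sq_cpow_sub_one {s : ℝ} (hs : 0 < s) (u : ℂ) :
    (s : ℂ) * ((s ^ 2 : ℝ) : ℂ) ^ (u - 1) = (s : ℂ) ^ (2 * u - 1) := by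
  have hs' : (s : ℂ) ≠ 0 := mod_cast hs.ne'
  have hsq : ((s ^ 2 : ℝ) : ℂ) ^ (u - 1) = (s : ℂ) ^ (2 * (u - 1)) := by
    rw [Complex.cpow_def_of_ne_zero (mod_cast (pow_pos hs 2).ne'), Complex.cpow_def_of_ne_zero hs',
      ← Complex.ofReal_log (sq_nonneg s), ← Complex.ofReal_log hs.le, Real.log_pow]
    push_cast
    ring_nf
  rw [hsq, show 2 * u - 1 = 1 + 2 * (u - 1) by ring, Complex.cpow_add _ _ hs', Complex.cpow_one]

lemma betaIntegral_eq_two_mul_integral_sin_cos (u v : ℂ) :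
    Complex.betaIntegral u v = 2 * ∫ θ in Set.Ioo 0 (Real.pi / 2),
      (Real.sin θ : ℂ) ^ (2 * u - 1) * (Real.cos θ : ℂ) ^ (2 * v - 1) := by
  have hsubst := integral_image_eq_integral_abs_deriv_smul
    (f := fun θ ↦ Real.sin θ ^ 2) (f' := fun θ ↦ 2 * Real.sin θ * Real.cos θ) measurableSet_Ioo
    (fun θ _ ↦ (((Real.hasDerivAt_sin θ).pow 2).congr_deriv (by simp)).hasDerivWithinAt)
    injOn_sin_sq_Ioo (fun x : ℝ ↦ (x : ℂ) ^ (u - 1) * (1 - (x : ℂ)) ^ (v - 1))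
  rw [Complex.betaIntegral, intervalIntegral.integral_of_le zero_le_one,
    integral_Ioc_eq_integral_Ioo, ← image_sin_sq_Ioo, hsubst, ← integral_const_mul]
  refine setIntegral_congr_fun measurableSet_Ioo fun θ hθ ↦ ?_
  have hsin := Real.sin_pos_of_pos_of_lt_pi hθ.1 (by linarith [hθ.2, Real.pi_pos])
  have hcos := cos_pos_of_mem_Ioo_zero hθ
  have hcos_sq : (1 : ℂ) - ((Real.sin θ ^ 2 : ℝ) : ℂ) = ((Real.cos θ ^ 2 : ℝ) : ℂ) := by
    rw [Real.cos_sq']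
    push_cast
    ring
  rw [hcos_sq, abs_of_pos (by positivity), Complex.real_smul, ← ofReal_mul_sq_cpow_sub_one hsin,
    ← ofReal_mul_sq_cpow_sub_one hcos, Complex.ofReal_mul, Complex.ofReal_mul, Complex.ofReal_ofNat]
  ring

lemma integral_cos_cpow {w : ℂ} (hw : -1 < w.re) :
    ∫ θ in Set.Ioo 0 (Real.pi / 2), (Real.cos θ : ℂ) ^ w =
      Real.pi * Complex.Gamma (w + 1) / (2 * 2 ^ w * Complex.Gamma (w / 2 + 1) ^ 2) := by
  have hbeta := Complex.Gamma_mul_Gamma_eq_betaIntegral (s := 1 / 2) (t := (w + 1) / 2)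
    (by norm_num) (by simp; linarith)
  have hdup := Complex.Gamma_mul_Gamma_add_half ((w + 1) / 2)
  have hGamma : Complex.Gamma (w / 2 + 1) ≠ 0 :=
    Complex.Gamma_ne_zero_of_re_pos (by simp; linarith)
  have hpi : (√Real.pi : ℂ) * √Real.pi = Real.pi := mod_cast Real.mul_self_sqrt Real.pi_pos.le
  have hsqrt : (Real.pi : ℂ) ^ (1 / 2 : ℂ) = √Real.pi := by
    rw [Real.sqrt_eq_rpow, Complex.ofReal_cpow Real.pi_pos.le]
    norm_num
  have htwo : (2 : ℂ) ^ w * 2 ^ (-w) = 1 := by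
    rw [← Complex.cpow_add _ _ two_ne_zero, add_neg_cancel, Complex.cpow_zero]
  have htwo_ne : (2 : ℂ) ^ w ≠ 0 := left_ne_zero_of_mul_eq_one htwo
  rw [betaIntegral_eq_two_mul_integral_sin_cos, Complex.Gamma_one_half_eq, hsqrt,
    show (1 : ℂ) / 2 + (w + 1) / 2 = w / 2 + 1 by ring, show 2 * ((w + 1) / 2) - 1 = w by ring,
    show 2 * (1 / 2) - 1 = (0 : ℂ) by ring] at hbeta
  simp only [Complex.cpow_zero, one_mul] at hbeta
  rw [show (w + 1) / 2 + 1 / 2 = w / 2 + 1 by ring, show 2 * ((w + 1) / 2) = w + 1 by ring,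
    show 1 - (w + 1) = -w by ring] at hdup
  rw [eq_div_iff (mul_ne_zero (mul_ne_zero two_ne_zero htwo_ne) (pow_ne_zero 2 hGamma))]
  linear_combination (-2 ^ w * Complex.Gamma (w / 2 + 1)) * hbeta + 2 ^ w * (√Real.pi : ℂ) * hdup +
    Complex.Gamma (w + 1) * (hpi + √Real.pi * √Real.pi * htwo)

end BetaIntegral

section Neumann

lemma ring_choose_add_natCast {b : ℂ} (hb : -1 < b.re) (i : ℕ) :
    Ring.choose (b + i) i =
      Complex.Gamma (b + i + 1) / ((Nat.factorial i : ℂ) * Complex.Gamma (b + 1)) := by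
  have hGamma : Complex.Gamma (b + 1) ≠ 0 := Complex.Gamma_ne_zero_of_re_pos (by simp; linarith)
  have hfactorial : (Nat.factorial i : ℂ) ≠ 0 := mod_cast Nat.factorial_ne_zero _
  have hne (k : ℕ) : b + 1 ≠ -k := by
    intro h
    have := congrArg Complex.re h
    simp only [Complex.add_re, Complex.one_re, Complex.neg_re, Complex.natCast_re] at this
    linarith [k.cast_nonneg (α := ℝ)]
  rw [Ring.choose_eq_smul, Polynomial.descPochhammer_smeval_eq_ascPochhammer,
    Polynomial.ascPochhammer_smeval_eq_eval, show b + i - i + 1 = b + 1 by ring,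
    ← Complex.Gamma_add_nat_div_Gamma_eq _ hne, show b + 1 + i = b + i + 1 by ring, smul_eq_mul]
  field_simp

variable {ν : ℂ}

lemma besselCoeff_mul_besselCoeff (hν : -1 < ν.re) (i j : ℕ) :
    besselCoeff ν i * besselCoeff ν j =
      (-1) ^ (i + j) / Complex.Gamma (ν + (i + j : ℕ) + 1) ^ 2 *
        (Ring.choose (ν + (i + j : ℕ)) i * Ring.choose (ν + (i + j : ℕ)) j) := by
  have hre (m : ℕ) : -1 < (ν + m).re := by
    simp only [Complex.add_re, Complex.natCast_re]
    linarith [m.cast_nonneg (α := ℝ)]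
  have hGamma (m : ℕ) : Complex.Gamma (ν + m + 1) ≠ 0 :=
    Complex.Gamma_ne_zero_of_re_pos (by rw [Complex.add_re, Complex.one_re]; linarith [hre m])
  have hfactorial (m : ℕ) : (Nat.factorial m : ℂ) ≠ 0 := mod_cast Nat.factorial_ne_zero m
  have hi : ν + (i + j : ℕ) = ν + j + i := by push_cast; ring
  have hj : ν + (i + j : ℕ) = ν + i + j := by push_cast; ring
  have hchoose_i := hi ▸ ring_choose_add_natCast (hre j) i
  have hchoose_j := hj ▸ ring_choose_add_natCast (hre i) j
  have := hGamma i
  have := hGamma j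
  have := hGamma (i + j)
  have := hfactorial i
  have := hfactorial j
  rw [hchoose_i, hchoose_j, besselCoeff, besselCoeff, pow_add]
  field_simp

lemma sum_antidiagonal_besselCoeff_mul (hν : -1 / 2 < ν.re) (k : ℕ) :
    ∑ ij ∈ Finset.HasAntidiagonal.antidiagonal k, besselCoeff ν ij.1 * besselCoeff ν ij.2 =
      besselCoeff (2 * ν) k *
        (Complex.Gamma (2 * ν + 2 * k + 1) / Complex.Gamma (ν + k + 1) ^ 2) := by
  have hre : -1 < (2 * ν + k).re := by
    simp only [Complex.add_re, Complex.mul_re, Complex.re_ofNat, Complex.im_ofNat, zero_mul,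
      sub_zero, Complex.natCast_re]
    linarith [k.cast_nonneg (α := ℝ)]
  have hterm (ij : ℕ × ℕ) (hij : ij ∈ Finset.HasAntidiagonal.antidiagonal k) :
      besselCoeff ν ij.1 * besselCoeff ν ij.2 = (-1) ^ k / Complex.Gamma (ν + k + 1) ^ 2 *
        (Ring.choose (ν + k) ij.1 * Ring.choose (ν + k) ij.2) := by
    rw [besselCoeff_mul_besselCoeff (by linarith), Finset.HasAntidiagonal.mem_antidiagonal.1 hij]
  rw [Finset.sum_congr rfl hterm, ← Finset.mul_sum, ← Ring.add_choose_eq k (Commute.all _ _),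
    show ν + k + (ν + k) = 2 * ν + k + k by ring, ring_choose_add_natCast hre, besselCoeff,
    show 2 * ν + k + k + 1 = 2 * ν + 2 * k + 1 by ring]
  ring

lemma exp_mul_log_ofReal_eq_cpow {x : ℝ} (hx : 0 < x) (w : ℂ) :
    Complex.exp (w * Real.log x) = (x : ℂ) ^ w := by
  rw [Complex.cpow_def_of_ne_zero (mod_cast hx.ne'), ← Complex.ofReal_log hx.le, mul_comm]

lemma hasSum_besselJ (μ : ℂ) {x : ℝ} (hx : 0 < x) :
    HasSum (fun k : ℕ ↦ besselCoeff μ k * ((x / 2 : ℝ) : ℂ) ^ (μ + 2 * k)) (besselJ μ x) := by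
  simp_rw [← exp_mul_log_ofReal_eq_cpow (half_pos hx), besselJ_eq_besselJExp_log]
  exact (summable_expSeries (isEntireCoeff_besselCoeff μ) μ _).hasSum

lemma summable_norm_besselCoeff_mul_cpow (μ : ℂ) {x : ℝ} (hx : 0 < x) :
    Summable fun k : ℕ ↦ ‖besselCoeff μ k * (x : ℂ) ^ (μ + 2 * k)‖ := by
  simp_rw [← exp_mul_log_ofReal_eq_cpow hx]
  exact (summable_expSeries (isEntireCoeff_besselCoeff μ) μ _).norm

lemma besselJ_sq_eq_tsum (hν : -1 / 2 < ν.re) {x : ℝ} (hx : 0 < x) :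
    besselJ ν x ^ 2 = ∑' k : ℕ, besselCoeff (2 * ν) k *
      (Complex.Gamma (2 * ν + 2 * k + 1) / Complex.Gamma (ν + k + 1) ^ 2) *
        ((x / 2 : ℝ) : ℂ) ^ (2 * ν + 2 * k) := by
  have hx2 : ((x / 2 : ℝ) : ℂ) ≠ 0 := mod_cast (half_pos hx).ne'
  have hsummable := summable_norm_besselCoeff_mul_cpow ν (half_pos hx)
  rw [← (hasSum_besselJ ν hx).tsum_eq, pow_two,
    tsum_mul_tsum_eq_tsum_sum_antidiagonal_of_summable_norm hsummable hsummable]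
  refine tsum_congr fun k ↦ ?_
  rw [← sum_antidiagonal_besselCoeff_mul hν, Finset.sum_mul]
  refine Finset.sum_congr rfl fun ij hij ↦ ?_
  rw [mul_mul_mul_comm, ← Complex.cpow_add _ _ hx2, ← Finset.HasAntidiagonal.mem_antidiagonal.1 hij]
  push_cast
  ring_nf

lemma integral_cos_cpow_add_natCast (hν : 0 ≤ ν.re) {x : ℝ} (hx : 0 < x) (k : ℕ) :
    ∫ θ in Set.Ioo 0 (Real.pi / 2), ((x * Real.cos θ : ℝ) : ℂ) ^ (2 * ν + 2 * k) =
      Real.pi / 2 * (Complex.Gamma (2 * ν + 2 * k + 1) / Complex.Gamma (ν + k + 1) ^ 2) *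
        ((x / 2 : ℝ) : ℂ) ^ (2 * ν + 2 * k) := by
  have hre : -1 < (2 * ν + 2 * k).re := by
    simp
    linarith [k.cast_nonneg (α := ℝ)]
  have hmul (θ : ℝ) (hθ : θ ∈ Set.Ioo 0 (Real.pi / 2)) :
      ((x * Real.cos θ : ℝ) : ℂ) ^ (2 * ν + 2 * k) =
        (x : ℂ) ^ (2 * ν + 2 * k) * (Real.cos θ : ℂ) ^ (2 * ν + 2 * k) := by
    rw [Complex.ofReal_mul, Complex.mul_cpow_ofReal_nonneg hx.le
      (Real.cos_nonneg_of_mem_Icc ⟨by linarith [hθ.1, Real.pi_pos], hθ.2.le⟩)]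
  have hdiv : ((x / 2 : ℝ) : ℂ) ^ (2 * ν + 2 * k) =
      (x : ℂ) ^ (2 * ν + 2 * k) / 2 ^ (2 * ν + 2 * k) := by
    rw [Complex.ofReal_div, Complex.div_cpow_ofReal_nonneg hx.le zero_le_two, Complex.ofReal_ofNat]
  rw [setIntegral_congr_fun measurableSet_Ioo hmul, integral_const_mul, integral_cos_cpow hre, hdiv,
    show (2 * ν + 2 * k) / 2 + 1 = ν + k + 1 by ring]
  ring

lemma norm_mul_cos_cpow_le {x : ℝ} (hx : 0 < x) {w : ℂ} (hw : 0 ≤ w.re) {θ : ℝ}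
    (hθ : 0 < Real.cos θ) : ‖((x * Real.cos θ : ℝ) : ℂ) ^ w‖ ≤ ‖(x : ℂ) ^ w‖ := by
  rw [Complex.norm_cpow_eq_rpow_re_of_pos (by positivity), Complex.norm_cpow_eq_rpow_re_of_pos hx]
  exact Real.rpow_le_rpow (by positivity) (mul_le_of_le_one_right hx.le (Real.cos_le_one θ)) hw

theorem besselJ_sq_eq_integral (hν : 0 ≤ ν.re) {x : ℝ} (hx : 0 < x) :
    besselJ ν x ^ 2 =
      2 / Real.pi * ∫ θ in Set.Ioo 0 (Real.pi / 2), besselJ (2 * ν) (2 * x * Real.cos θ) := by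
  have hpi : (Real.pi : ℂ) ≠ 0 := mod_cast Real.pi_ne_zero
  have hre (k : ℕ) : 0 ≤ (2 * ν + 2 * k).re := by
    simpa using add_nonneg (mul_nonneg zero_le_two hν) (mul_nonneg zero_le_two k.cast_nonneg)
  have hsum := hasSum_integral_of_dominated_convergence
    (μ := volume.restrict (Set.Ioo 0 (Real.pi / 2)))
    (F := fun k θ ↦ besselCoeff (2 * ν) k * ((x * Real.cos θ : ℝ) : ℂ) ^ (2 * ν + 2 * k))
    (f := fun θ ↦ besselJ (2 * ν) (2 * x * Real.cos θ))
    (bound := fun k _ ↦ ‖besselCoeff (2 * ν) k * (x : ℂ) ^ (2 * ν + 2 * k)‖)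
    (fun k ↦ Measurable.aestronglyMeasurable (by fun_prop))
    (fun k ↦ ?_) (.of_forall fun _ ↦ summable_norm_besselCoeff_mul_cpow _ hx)
    (integrable_const _) ?_
  · rw [besselJ_sq_eq_tsum (by linarith) hx, ← hsum.tsum_eq, ← tsum_mul_left]
    refine tsum_congr fun k ↦ ?_
    rw [integral_const_mul, integral_cos_cpow_add_natCast hν hx]
    field_simp
  · filter_upwards [ae_restrict_mem measurableSet_Ioo] with θ hθ
    rw [norm_mul, norm_mul]
    gcongr
    exact norm_mul_cos_cpow_le hx (hre k) (cos_pos_of_mem_Ioo_zero hθ)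
  · filter_upwards [ae_restrict_mem measurableSet_Ioo] with θ hθ
    have hsum := hasSum_besselJ (2 * ν) (x := 2 * x * Real.cos θ)
      (mul_pos (mul_pos two_pos hx) (cos_pos_of_mem_Ioo_zero hθ))
    rwa [show 2 * x * Real.cos θ / 2 = x * Real.cos θ by ring] at hsum

end Neumann

section SquareLaplace

variable {μ : ℂ} {τ p b : ℝ}

lemma exists_norm_besselJ_sq_le (hμ : μ.re = 0) : ∃ K, ∀ x, ‖besselJ μ x ^ 2‖ ≤ K := by
  obtain ⟨K, hK⟩ := exists_norm_besselJ_le hμ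
  refine ⟨K ^ 2, fun x ↦ ?_⟩
  rw [norm_pow]
  gcongr
  exact hK x

lemma integral_exp_neg_mul_besselJ_comp_mul (hμ : μ.re = 0) (hμ₀ : μ ≠ 0) (hb : 0 < b) {ξ : ℝ}
    (hξ : 0 < ξ) :
    ∫ x in Set.Ioi (0 : ℝ), (Real.exp (-(b * Real.sinh ξ) * x) : ℂ) * besselJ μ (b * x) =
      ((b * Real.cosh ξ)⁻¹ : ℝ) * Complex.exp (-μ * ξ) := by
  have hcosh : (Real.cosh ξ : ℂ) ≠ 0 := mod_cast (Real.cosh_pos ξ).ne'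
  have hscale := integral_comp_mul_left_Ioi
    (fun x : ℝ ↦ ((x ^ 0 * Real.exp (-Real.sinh ξ * x) : ℝ) : ℂ) * besselJ μ x) 0 hb
  rw [mul_zero, ← besselLaplace, Complex.real_smul] at hscale
  rw [← cosh_mul_besselLaplace_sinh hμ hμ₀ hξ, mul_inv, Complex.ofReal_mul, Complex.ofReal_inv _,
    Complex.ofReal_inv, mul_assoc, inv_mul_cancel_left₀ hcosh, ← Complex.ofReal_inv, ← hscale]
  refine setIntegral_congr_fun measurableSet_Ioi fun x _ ↦ ?_
  rw [pow_zero, one_mul, show -Real.sinh ξ * (b * x) = -(b * Real.sinh ξ) * x by ring]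

lemma sinh_mul_cosh_mul_integral_cos_div_sinh_sq_add_cosh_sq (hτ : τ ≠ 0) (ξ : ℝ) :
    Real.sinh ξ * Real.cosh ξ *
        ∫ s in Set.Ioi (0 : ℝ), Real.cos (τ * s) / (Real.sinh ξ ^ 2 + Real.cosh s ^ 2) =
      Real.pi / 2 * Real.sin (τ * ξ) / Real.sinh (Real.pi * τ / 2) := by
  have hfourier := sinh_mul_integral_Ioi_cos_div_cosh_add_cosh (div_ne_zero hτ two_ne_zero) (2 * ξ)
  have hscale := integral_comp_mul_left_Ioi
    (fun t ↦ Real.cos (τ / 2 * t) / (Real.cosh t + Real.cosh (2 * ξ))) 0 two_pos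
  have hdouble (s : ℝ) : Real.cos (τ / 2 * (2 * s)) / (Real.cosh (2 * s) + Real.cosh (2 * ξ)) =
      1 / 2 * (Real.cos (τ * s) / (Real.sinh ξ ^ 2 + Real.cosh s ^ 2)) := by
    rw [show Real.cosh (2 * s) + Real.cosh (2 * ξ) = 2 * (Real.sinh ξ ^ 2 + Real.cosh s ^ 2) by
      rw [Real.cosh_two_mul, Real.cosh_two_mul, Real.cosh_sq ξ, Real.sinh_sq s]; ring,
      show τ / 2 * (2 * s) = τ * s by ring]
    field_simp
  simp only [hdouble, mul_zero, smul_eq_mul, integral_const_mul] at hscale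
  rw [Real.sinh_two_mul, show τ / 2 * (2 * ξ) = τ * ξ by ring,
    show Real.pi * (τ / 2) = Real.pi * τ / 2 by ring] at hfourier
  linear_combination hfourier / 2 + 2 * Real.sinh ξ * Real.cosh ξ * hscale

lemma im_integral_exp_neg_mul_besselJ (hτ : τ ≠ 0) (hp : 0 < p) (hb : 0 < b) :
    (∫ x in Set.Ioi (0 : ℝ), (Real.exp (-p * x) : ℂ) * besselJ (Complex.I * τ) (b * x)).im =
      -(2 / Real.pi) * Real.sinh (Real.pi * τ / 2) *
        ∫ s in Set.Ioi (0 : ℝ), Real.cos (τ * s) * (p / (p ^ 2 + (b * Real.cosh s) ^ 2)) := by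
  obtain ⟨ξ, hξ, rfl⟩ : ∃ ξ, 0 < ξ ∧ b * Real.sinh ξ = p :=
    ⟨Real.arsinh (p / b), Real.arsinh_pos_iff.2 (by positivity), by
      rw [Real.sinh_arsinh, mul_div_cancel₀ _ hb.ne']⟩
  have hsinh : Real.sinh (Real.pi * τ / 2) ≠ 0 := Real.sinh_ne_zero.2 (by positivity)
  have hphase : -(Complex.I * τ) * ξ = (-(τ * ξ) : ℝ) * Complex.I := by push_cast; ring
  have hkernel (s : ℝ) :
      Real.cos (τ * s) * (b * Real.sinh ξ / ((b * Real.sinh ξ) ^ 2 + (b * Real.cosh s) ^ 2)) =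
        Real.sinh ξ / b * (Real.cos (τ * s) / (Real.sinh ξ ^ 2 + Real.cosh s ^ 2)) := by
    field_simp
  have hfourier := sinh_mul_cosh_mul_integral_cos_div_sinh_sq_add_cosh_sq hτ ξ
  rw [eq_div_iff hsinh] at hfourier
  simp only [hkernel, integral_const_mul]
  rw [integral_exp_neg_mul_besselJ_comp_mul (by simp) (by simpa using hτ) hb hξ,
    Complex.im_ofReal_mul, hphase, Complex.exp_ofReal_mul_I_im, Real.sin_neg]
  have := Real.cosh_pos ξ
  generalize Real.sinh (Real.pi * τ / 2) = σ at hfourier ⊢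
  field_simp
  linear_combination 2 * hfourier

lemma integrable_prod_exp_neg_mul_besselJ (hμ : μ.re = 0) (hp : 0 < p) :
    Integrable
      (fun z : ℝ × ℝ ↦ (Real.exp (-p * z.1) : ℂ) * besselJ μ (2 * Real.cos z.2 * z.1))
      ((volume.restrict (Set.Ioi 0)).prod (volume.restrict (Set.Ioo 0 (Real.pi / 2)))) := by
  obtain ⟨K, hK⟩ := exists_norm_besselJ_le hμ
  have hexp := (integrableOn_pow_mul_exp_neg_mul 0 hp).mul_prod
    (integrable_const (μ := volume.restrict (Set.Ioo 0 (Real.pi / 2))) K)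
  refine hexp.mono' ?_ (.of_forall fun z ↦ ?_)
  · rw [Measure.prod_restrict]
    refine ContinuousOn.aestronglyMeasurable ?_ (measurableSet_Ioi.prod measurableSet_Ioo)
    refine ContinuousOn.mul (by fun_prop) ((continuousOn_besselJ μ).comp (by fun_prop) ?_)
    rintro ⟨x, θ⟩ ⟨hx, hθ⟩
    exact mul_pos (mul_pos two_pos (cos_pos_of_mem_Ioo_zero hθ)) hx
  · rw [norm_mul, Complex.norm_of_nonneg (Real.exp_pos _).le, pow_zero, one_mul]
    gcongr
    exact hK _

lemma integral_exp_neg_mul_besselJ_sq (hμ : μ.re = 0) (hp : 0 < p) :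
    ∫ x in Set.Ioi (0 : ℝ), (Real.exp (-p * x) : ℂ) * besselJ μ x ^ 2 =
      ((2 / Real.pi : ℝ) : ℂ) * ∫ θ in Set.Ioo 0 (Real.pi / 2), ∫ x in Set.Ioi (0 : ℝ),
        (Real.exp (-p * x) : ℂ) * besselJ (2 * μ) (2 * Real.cos θ * x) := by
  rw [← integral_integral_swap (integrable_prod_exp_neg_mul_besselJ (by simp [hμ]) hp),
    ← integral_const_mul]
  refine setIntegral_congr_fun measurableSet_Ioi fun x hx ↦ ?_
  rw [besselJ_sq_eq_integral hμ.ge hx, integral_const_mul]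
  simp only [mul_right_comm 2 x]
  push_cast
  ring

lemma inv_sqrt_sq_add_two_mul_cosh_sq_le (p s : ℝ) :
    1 / √(p ^ 2 + (2 * Real.cosh s) ^ 2) ≤ 1 / (Real.cosh s + Real.cosh 0) := by
  have hcosh := Real.one_le_cosh s
  rw [Real.cosh_zero]
  refine one_div_le_one_div_of_le (by positivity) (Real.le_sqrt_of_sq_le ?_)
  nlinarith [sq_nonneg p]

lemma integral_Ioo_div_sq_add_sq_mul_cos_sq (hp : 0 < p) (B : ℝ) :
    ∫ θ in Set.Ioo 0 (Real.pi / 2), p / (p ^ 2 + B ^ 2 * Real.cos θ ^ 2) =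
      Real.pi / 2 / √(p ^ 2 + B ^ 2) := by
  rw [← integral_div_sq_add_sq_mul_cos_sq hp, intervalIntegral.integral_of_le (by positivity),
    integral_Ioc_eq_integral_Ioo]

lemma integrable_prod_div_sq_add_cosh_sq_mul_cos_sq (hp : 0 < p) :
    Integrable (fun z : ℝ × ℝ ↦ p / (p ^ 2 + (2 * Real.cosh z.1) ^ 2 * Real.cos z.2 ^ 2))
      ((volume.restrict (Set.Ioi 0)).prod (volume.restrict (Set.Ioo 0 (Real.pi / 2)))) := by
  have hcont : Continuous fun z : ℝ × ℝ ↦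
      p / (p ^ 2 + (2 * Real.cosh z.1) ^ 2 * Real.cos z.2 ^ 2) :=
    continuous_const.div (by fun_prop) fun z ↦ by positivity
  have hnorm (s θ : ℝ) : ‖p / (p ^ 2 + (2 * Real.cosh s) ^ 2 * Real.cos θ ^ 2)‖ =
      p / (p ^ 2 + (2 * Real.cosh s) ^ 2 * Real.cos θ ^ 2) :=
    Real.norm_of_nonneg (by positivity)
  rw [integrable_prod_iff hcont.aestronglyMeasurable]
  simp only [hnorm, integral_Ioo_div_sq_add_sq_mul_cos_sq hp]
  refine ⟨.of_forall fun s ↦ ?_,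
    ((integrable_inv_cosh_add_cosh 0).integrableOn.const_mul (Real.pi / 2)).mono'
      (Continuous.aestronglyMeasurable ?_) (.of_forall fun s ↦ ?_)⟩
  · exact ((continuous_div_sq_add_sq_mul_cos_sq hp _).integrableOn_Icc).mono_set
      Set.Ioo_subset_Icc_self
  · exact continuous_const.div (by fun_prop) fun s ↦ by have := Real.cosh_pos s; positivity
  · rw [Real.norm_of_nonneg (by positivity), div_eq_mul_one_div]
    exact mul_le_mul_of_nonneg_left (inv_sqrt_sq_add_two_mul_cosh_sq_le p s) (by positivity)

lemma integral_Ioo_integral_cos_mul_div (τ : ℝ) (hp : 0 < p) :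
    ∫ θ in Set.Ioo 0 (Real.pi / 2), ∫ s in Set.Ioi (0 : ℝ),
        Real.cos (τ * s) * (p / (p ^ 2 + (2 * Real.cosh s) ^ 2 * Real.cos θ ^ 2)) =
      Real.pi / 2 *
        ∫ s in Set.Ioi (0 : ℝ), Real.cos (τ * s) / √(p ^ 2 + (2 * Real.cosh s) ^ 2) := by
  rw [← integral_integral_swap ((integrable_prod_div_sq_add_cosh_sq_mul_cos_sq hp).bdd_mul
    (c := 1) (Continuous.aestronglyMeasurable (by fun_prop))
    (.of_forall fun z ↦ Real.abs_cos_le_one _)), ← integral_const_mul]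
  refine integral_congr_ae (.of_forall fun s ↦ ?_)
  simp only
  rw [integral_const_mul, integral_Ioo_div_sq_add_sq_mul_cos_sq hp]
  ring

lemma im_integral_exp_neg_mul_besselJ_sq (hτ : τ ≠ 0) (hp : 0 < p) :
    (∫ x in Set.Ioi (0 : ℝ), (Real.exp (-p * x) : ℂ) * besselJ (Complex.I * τ / 2) x ^ 2).im =
      -(2 / Real.pi) * Real.sinh (Real.pi * τ / 2) *
        ∫ s in Set.Ioi (0 : ℝ), Real.cos (τ * s) / √(p ^ 2 + (2 * Real.cosh s) ^ 2) := by
  have hinner := integral_im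
    (integrable_prod_exp_neg_mul_besselJ (μ := Complex.I * τ) (by simp) hp).integral_prod_right
  simp only [RCLike.im_eq_complex_im] at hinner
  rw [integral_exp_neg_mul_besselJ_sq (by simp) hp, mul_div_cancel₀ _ two_ne_zero,
    Complex.im_ofReal_mul, ← hinner, setIntegral_congr_fun measurableSet_Ioo fun θ hθ ↦
      im_integral_exp_neg_mul_besselJ hτ hp (mul_pos two_pos (cos_pos_of_mem_Ioo_zero hθ)),
    integral_const_mul]
  simp only [show ∀ θ s : ℝ, (2 * Real.cos θ * Real.cosh s) ^ 2 =
    (2 * Real.cosh s) ^ 2 * Real.cos θ ^ 2 by intros; ring]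
  rw [integral_Ioo_integral_cos_mul_div τ hp]
  field_simp

theorem integral_exp_neg_mul_im_besselJ_sq (hτ : τ ≠ 0) (hp : 0 < p) :
    ∫ x in Set.Ioi (0 : ℝ), Real.exp (-p * x) * (besselJ (Complex.I * τ / 2) x ^ 2).im =
      -(2 / Real.pi) * Real.sinh (Real.pi * τ / 2) *
        ∫ s in Set.Ioi (0 : ℝ), Real.cos (τ * s) / √(p ^ 2 + (2 * Real.cosh s) ^ 2) := by
  have hμ : (Complex.I * τ / 2).re = 0 := by simp
  obtain ⟨K, hK⟩ := exists_norm_besselJ_sq_le hμ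
  have hexp : IntegrableOn (fun x : ℝ ↦ (Real.exp (-p * x) : ℂ)) (Set.Ioi 0) :=
    (exp_neg_integrableOn_Ioi 0 hp).ofReal
  have hint : IntegrableOn (fun x : ℝ ↦
      (Real.exp (-p * x) : ℂ) * besselJ (Complex.I * τ / 2) x ^ 2) (Set.Ioi 0) :=
    hexp.mul_bdd (((continuousOn_besselJ _).pow 2).aestronglyMeasurable measurableSet_Ioi)
      (.of_forall hK)
  have him := integral_im hint
  simp only [RCLike.im_eq_complex_im, Complex.im_ofReal_mul] at him
  rw [him, im_integral_exp_neg_mul_besselJ_sq hτ hp]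

end SquareLaplace

section StruveTransform

variable {q τ : ℝ}

lemma continuous_exp_neg_mul_sinh_mul_sinh_div_cosh_sq (q : ℝ) :
    Continuous fun z : ℝ × ℝ ↦
      Real.exp (-(q * z.1) * Real.sinh z.2) * (Real.sinh z.2 / Real.cosh z.2 ^ 2) := by
  have := continuous_sinh_div_cosh_sq.comp (continuous_snd (X := ℝ))
  fun_prop

lemma integral_exp_neg_mul_sinh_mul_sinh_div_cosh_sq (hq : 0 < q) {t : ℝ} (ht : 0 < t) :
    ∫ x in Set.Ioi (0 : ℝ), Real.exp (-(q * x) * Real.sinh t) * (Real.sinh t / Real.cosh t ^ 2) =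
      1 / (q * Real.cosh t ^ 2) := by
  have hsinh := Real.sinh_pos_iff.2 ht
  simp only [show ∀ x, -(q * x) * Real.sinh t = -(q * Real.sinh t) * x by intros; ring]
  rw [integral_mul_const, integral_exp_mul_Ioi (by nlinarith), mul_zero, Real.exp_zero]
  field_simp

lemma integrable_prod_exp_neg_mul_sinh_mul_sinh_div_cosh_sq (hq : 0 < q) :
    Integrable
      (fun z : ℝ × ℝ ↦ Real.exp (-(q * z.1) * Real.sinh z.2) * (Real.sinh z.2 / Real.cosh z.2 ^ 2))
      ((volume.restrict (Set.Ioi 0)).prod (volume.restrict (Set.Ioi 0))) := by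
  have hcont := continuous_exp_neg_mul_sinh_mul_sinh_div_cosh_sq q
  rw [integrable_prod_iff' hcont.aestronglyMeasurable]
  refine ⟨?_, ((integrable_inv_cosh_add_cosh 0).integrableOn.const_mul (2 / q)).mono'
    hcont.norm.stronglyMeasurable.integral_prod_left'.aestronglyMeasurable ?_⟩
  · filter_upwards [ae_restrict_mem measurableSet_Ioi] with t ht
    have hsinh := Real.sinh_pos_iff.2 (Set.mem_Ioi.1 ht)
    simp only [show ∀ x, -(q * x) * Real.sinh t = -(q * Real.sinh t) * x by intros; ring]
    exact (exp_neg_integrableOn_Ioi 0 (mul_pos hq hsinh)).mul_const _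
  · filter_upwards [ae_restrict_mem measurableSet_Ioi] with t ht
    have hweight := sinh_div_cosh_sq_nonneg (Set.mem_Ioi.1 ht).le
    simp only [Real.norm_of_nonneg (mul_nonneg (Real.exp_pos _).le hweight)]
    rw [integral_exp_neg_mul_sinh_mul_sinh_div_cosh_sq hq ht, Real.norm_of_nonneg (by positivity),
      Real.cosh_zero, div_mul_div_comm, div_le_div_iff₀ (by positivity) (by positivity)]
    nlinarith [mul_le_mul_of_nonneg_left
      (show Real.cosh t + 1 ≤ 2 * Real.cosh t ^ 2 by nlinarith [Real.one_le_cosh t]) hq.le]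

lemma integrableOn_struveRemainder_mul (hq : 0 < q) :
    IntegrableOn (fun x ↦ struveRemainder (q * x)) (Set.Ioi 0) :=
  (integrable_prod_exp_neg_mul_sinh_mul_sinh_div_cosh_sq hq).integral_prod_left

lemma integrable_prod_sinh_div_cosh_sq_div_sqrt (hq : 0 < q) :
    Integrable
      (fun z : ℝ × ℝ ↦ Real.sinh z.2 / Real.cosh z.2 ^ 2 /
        √((q * Real.sinh z.2) ^ 2 + (2 * Real.cosh z.1) ^ 2))
      ((volume.restrict (Set.Ioi 0)).prod (volume.restrict (Set.Ioi 0))) := by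
  have hcont : Continuous fun z : ℝ × ℝ ↦ Real.sinh z.2 / Real.cosh z.2 ^ 2 /
      √((q * Real.sinh z.2) ^ 2 + (2 * Real.cosh z.1) ^ 2) :=
    (continuous_sinh_div_cosh_sq.comp continuous_snd).div (by fun_prop) fun z ↦ by positivity
  rw [integrable_prod_iff hcont.aestronglyMeasurable]
  have hcosh (s : ℝ) : 0 < 2 * Real.cosh s := mul_pos two_pos (Real.cosh_pos s)
  have hnorm (s : ℝ) : ∫ t in Set.Ioi (0 : ℝ), ‖Real.sinh t / Real.cosh t ^ 2 /
      √((q * Real.sinh t) ^ 2 + (2 * Real.cosh s) ^ 2)‖ = 1 / (q + 2 * Real.cosh s) := by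
    rw [← integral_sinh_div_cosh_sq_div_sqrt hq (hcosh s)]
    exact setIntegral_congr_fun measurableSet_Ioi fun t ht ↦ Real.norm_of_nonneg
      (div_nonneg (sinh_div_cosh_sq_nonneg (Set.mem_Ioi.1 ht).le) (Real.sqrt_nonneg _))
  simp only [hnorm]
  refine ⟨.of_forall fun s ↦ integrableOn_sinh_div_cosh_sq_div_sqrt hq (hcosh s),
    (integrable_inv_cosh_add_cosh 0).integrableOn.mono' (Continuous.aestronglyMeasurable ?_)
      (.of_forall fun s ↦ ?_)⟩
  · exact continuous_const.div (by fun_prop) fun s ↦ by positivity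
  · rw [Real.norm_of_nonneg (by positivity), Real.cosh_zero]
    exact one_div_le_one_div_of_le (by positivity) (by linarith [Real.one_le_cosh s])

lemma integral_sinh_div_cosh_sq_mul_integral_cos_div_sqrt (τ : ℝ) (hq : 0 < q) :
    ∫ t in Set.Ioi (0 : ℝ), Real.sinh t / Real.cosh t ^ 2 * ∫ s in Set.Ioi (0 : ℝ),
        Real.cos (τ * s) / √((q * Real.sinh t) ^ 2 + (2 * Real.cosh s) ^ 2) =
      ∫ s in Set.Ioi (0 : ℝ), Real.cos (τ * s) * (1 / (q + 2 * Real.cosh s)) := by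
  have hswap := integral_integral_swap (f := fun s t ↦ Real.cos (τ * s) *
      (Real.sinh t / Real.cosh t ^ 2 / √((q * Real.sinh t) ^ 2 + (2 * Real.cosh s) ^ 2)))
    ((integrable_prod_sinh_div_cosh_sq_div_sqrt hq).bdd_mul (c := 1)
    (Continuous.aestronglyMeasurable (by fun_prop)) (.of_forall fun z ↦ Real.abs_cos_le_one _))
  simp only [integral_const_mul] at hswap
  simp_rw [← integral_const_mul]
  simp_rw [integral_sinh_div_cosh_sq_div_sqrt hq (mul_pos two_pos (Real.cosh_pos _))] at hswap
  rw [hswap]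
  simp only [mul_div_left_comm]

theorem integral_im_besselJ_sq_mul_struveRemainder (hτ : τ ≠ 0) (hq : 0 < q) :
    ∫ x in Set.Ioi (0 : ℝ), (besselJ (Complex.I * τ / 2) x ^ 2).im * struveRemainder (q * x) =
      -(2 / Real.pi) * Real.sinh (Real.pi * τ / 2) *
        ∫ s in Set.Ioi (0 : ℝ), Real.cos (τ * s) * (1 / (q + 2 * Real.cosh s)) := by
  have hμ : (Complex.I * τ / 2).re = 0 := by simp
  obtain ⟨K, hK⟩ := exists_norm_besselJ_sq_le hμ
  have hswap := integral_integral_swap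
    (f := fun x t ↦ (besselJ (Complex.I * τ / 2) x ^ 2).im *
      (Real.exp (-(q * x) * Real.sinh t) * (Real.sinh t / Real.cosh t ^ 2)))
    ((integrable_prod_exp_neg_mul_sinh_mul_sinh_div_cosh_sq hq).bdd_mul (c := K)
      ((Complex.continuous_im.comp_continuousOn
        ((continuousOn_besselJ _).pow 2)).aestronglyMeasurable measurableSet_Ioi).comp_fst
      (.of_forall fun z ↦ (Complex.abs_im_le_norm _).trans (hK z.1)))
  simp only [integral_const_mul] at hswap
  simp only [struveRemainder]
  rw [hswap, ← integral_sinh_div_cosh_sq_mul_integral_cos_div_sqrt τ hq, ← integral_const_mul]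
  refine setIntegral_congr_fun measurableSet_Ioi fun t ht ↦ ?_
  have hlaplace := integral_exp_neg_mul_im_besselJ_sq hτ
    (mul_pos hq (Real.sinh_pos_iff.2 (Set.mem_Ioi.1 ht)))
  simp only [show ∀ x, (besselJ (Complex.I * τ / 2) x ^ 2).im *
      (Real.exp (-(q * x) * Real.sinh t) * (Real.sinh t / Real.cosh t ^ 2)) =
    Real.exp (-(q * Real.sinh t) * x) * (besselJ (Complex.I * τ / 2) x ^ 2).im *
      (Real.sinh t / Real.cosh t ^ 2) by intro x; ring_nf]
  rw [integral_mul_const, hlaplace]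
  ring

theorem integral_im_besselJ_sq_mul_struve_mul_sinh (hτ : τ ≠ 0) (u : ℝ) :
    (∫ x in Set.Ioi (0 : ℝ), (besselJ (Complex.I * τ / 2) x ^ 2).im *
        (x * struveK0 (2 * x * Real.cosh u) - 1 / (Real.pi * Real.cosh u))) * Real.sinh (2 * u) =
      Real.sinh (Real.pi * τ / 2) *
        (2 / (Real.pi * Real.sinh (Real.pi * τ)) * Real.sin (τ * u)) := by
  have hkernel : ∫ x in Set.Ioi (0 : ℝ), (besselJ (Complex.I * τ / 2) x ^ 2).im *
        (x * struveK0 (2 * x * Real.cosh u) - 1 / (Real.pi * Real.cosh u)) =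
      -(1 / (Real.pi * Real.cosh u)) * ∫ x in Set.Ioi (0 : ℝ),
        (besselJ (Complex.I * τ / 2) x ^ 2).im * struveRemainder (2 * Real.cosh u * x) := by
    rw [← integral_const_mul]
    refine setIntegral_congr_fun measurableSet_Ioi fun x hx ↦ ?_
    rw [mul_struveK0_sub hx, mul_right_comm 2 x]
    ring
  have hhalf : ∫ s in Set.Ioi (0 : ℝ), Real.cos (τ * s) * (1 / (2 * Real.cosh u + 2 * Real.cosh s))
      = 1 / 2 * ∫ s in Set.Ioi (0 : ℝ), Real.cos (τ * s) / (Real.cosh s + Real.cosh u) := by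
    rw [← integral_const_mul]
    congr with s
    rw [← mul_add, add_comm (Real.cosh u)]
    field_simp
  have hfourier := sinh_mul_integral_Ioi_cos_div_cosh_add_cosh hτ u
  have : Real.sinh (Real.pi * τ) ≠ 0 :=
    Real.sinh_ne_zero.2 (mul_ne_zero Real.pi_ne_zero hτ)
  rw [hkernel, integral_im_besselJ_sq_mul_struveRemainder hτ (by positivity), hhalf,
    Real.sinh_two_mul]
  field_simp at hfourier ⊢
  linear_combination hfourier

lemma norm_mul_struveK0_sub_le {x : ℝ} (hx : 0 < x) (u : ℝ) :
    ‖x * struveK0 (2 * x * Real.cosh u) - 1 / (Real.pi * Real.cosh u)‖ ≤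
      struveRemainder (2 * x) := by
  have hcosh := Real.one_le_cosh u
  have hcoeff : 1 / (Real.pi * Real.cosh u) ≤ 1 := by
    rw [div_le_one (by positivity)]
    nlinarith [Real.pi_gt_three]
  have hmono : struveRemainder (2 * x * Real.cosh u) ≤ struveRemainder (2 * x) :=
    antitoneOn_struveRemainder (Set.mem_Ioi.2 (by positivity)) (Set.mem_Ioi.2 (by positivity))
      (le_mul_of_one_le_right (by positivity) hcosh)
  rw [mul_struveK0_sub hx, norm_mul, norm_neg, Real.norm_of_nonneg (by positivity),
    Real.norm_of_nonneg (struveRemainder_nonneg _)]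
  exact (mul_le_of_le_one_left (struveRemainder_nonneg _) hcoeff).trans hmono

lemma integrable_prod_struve_mul {ν : Measure ℝ} [SFinite ν] {φ : ℝ → ℂ} (hφ : Integrable φ ν) :
    Integrable
      (fun z : ℝ × ℝ ↦ ((z.1 * struveK0 (2 * z.1 * Real.cosh z.2) -
        1 / (Real.pi * Real.cosh z.2) : ℝ) : ℂ) * φ z.2)
      ((volume.restrict (Set.Ioi 0)).prod ν) := by
  have hpos : ∀ᵐ z ∂(volume.restrict (Set.Ioi (0 : ℝ))).prod ν, 0 < z.1 :=
    Measure.quasiMeasurePreserving_fst.ae (ae_restrict_mem measurableSet_Ioi)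
  have hmeas : Measurable fun z : ℝ × ℝ ↦
      -(1 / (Real.pi * Real.cosh z.2)) * struveRemainder (2 * z.1 * Real.cosh z.2) := by
    have := measurable_struveRemainder
    fun_prop
  refine ((integrableOn_struveRemainder_mul two_pos).mul_prod hφ.norm).mono'
    (.mul (Complex.continuous_ofReal.comp_aestronglyMeasurable
      (hmeas.aestronglyMeasurable.congr ?_)) hφ.aestronglyMeasurable.comp_snd) ?_
  · filter_upwards [hpos] with z hz
    exact (mul_struveK0_sub hz z.2).symm
  · filter_upwards [hpos] with z hz
    rw [norm_mul, Complex.norm_real]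
    exact mul_le_mul_of_nonneg_right (norm_mul_struveK0_sub_le hz z.2) (norm_nonneg _)

end StruveTransform

theorem statement16_general (ν : Measure ℝ) [SFinite ν] (ψ φ : ℝ → ℂ)
    (hφ : ∀ u : ℝ, φ u = ψ u * (Real.sinh (2 * u) : ℂ)) (hφ_int : Integrable φ ν)
    (f : ℝ → ℂ)
    (hf : ∀ x : ℝ, 0 < x → f x = ∫ u,
      ((x * struveK0 (2 * x * Real.cosh u) - 1 / (Real.pi * Real.cosh u) : ℝ) : ℂ) * φ u ∂ν)
    {τ : ℝ} (hτ : τ ≠ 0) :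
    (1 / (Real.sinh (Real.pi * τ / 2) : ℂ)) *
        ∫ x in Set.Ioi (0 : ℝ), ((besselJ (Complex.I * τ / 2) x ^ 2).im : ℂ) * f x
      = ((2 / (Real.pi * Real.sinh (Real.pi * τ)) : ℝ) : ℂ) *
          ∫ u, ψ u * (Real.sin (τ * u) : ℂ) ∂ν := by
  have hμ : (Complex.I * τ / 2).re = 0 := by simp
  obtain ⟨K, hK⟩ := exists_norm_besselJ_sq_le hμ
  have hswap := integral_integral_swap
    (f := fun x u ↦ ((besselJ (Complex.I * τ / 2) x ^ 2).im : ℂ) *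
      (((x * struveK0 (2 * x * Real.cosh u) - 1 / (Real.pi * Real.cosh u) : ℝ) : ℂ) * φ u))
    ((integrable_prod_struve_mul hφ_int).bdd_mul (c := K)
    (((Complex.continuous_ofReal.comp Complex.continuous_im).comp_continuousOn
      ((continuousOn_besselJ _).pow 2)).aestronglyMeasurable measurableSet_Ioi).comp_fst
    (.of_forall fun z ↦ (Complex.norm_real _).le.trans
      ((Complex.abs_im_le_norm _).trans (hK z.1))))
  have hinner (u : ℝ) : ∫ x in Set.Ioi (0 : ℝ), ((besselJ (Complex.I * τ / 2) x ^ 2).im : ℂ) *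
        (((x * struveK0 (2 * x * Real.cosh u) - 1 / (Real.pi * Real.cosh u) : ℝ) : ℂ) * φ u) =
      Real.sinh (Real.pi * τ / 2) * ((2 / (Real.pi * Real.sinh (Real.pi * τ)) : ℝ) *
        (ψ u * Real.sin (τ * u))) := by
    have hkernel := congrArg ((↑) : ℝ → ℂ) (integral_im_besselJ_sq_mul_struve_mul_sinh hτ u)
    simp only [← mul_assoc, ← Complex.ofReal_mul]
    rw [integral_mul_const, integral_complex_ofReal, hφ]
    simp only [Complex.ofReal_mul] at hkernel ⊢
    linear_combination ψ u * hkernel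
  have hsinh : (Real.sinh (Real.pi * τ / 2) : ℂ) ≠ 0 :=
    Complex.ofReal_ne_zero.2 (Real.sinh_ne_zero.2 (by positivity))
  simp only [integral_const_mul, hinner] at hswap
  rw [setIntegral_congr_fun measurableSet_Ioi fun x hx ↦ by rw [hf x hx], hswap, one_div,
    inv_mul_cancel_left₀ hsinh]

theorem statement16 (ψ : ℝ → ℂ) (C : ℝ) (hC : 0 < C)
    (hper : ∀ u : ℝ, ψ (u + 2 * Real.pi) = ψ u)
    (hlip : ∀ u v : ℝ, ‖ψ u - ψ v‖ ≤ C * |u - v|)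
    (φ : ℝ → ℂ) (hφ : ∀ u : ℝ, φ u = ψ u * (Real.sinh (2 * u) : ℂ))
    (f : ℝ → ℂ)
    (hf : ∀ x : ℝ, 0 < x → f x = ∫ u in (-Real.pi)..Real.pi,
      ((x * struveK0 (2 * x * Real.cosh u) - 1 / (Real.pi * Real.cosh u) : ℝ) : ℂ) * φ u)
    (n : ℕ) (hn : 1 ≤ n) :
    (1 / (Real.sinh (Real.pi * n / 2) : ℂ)) *
        ∫ x in Set.Ioi (0 : ℝ), ((((besselJ (Complex.I * n / 2) x) ^ 2).im : ℂ)) * f x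
      = ((2 / (Real.pi * Real.sinh (Real.pi * n)) : ℝ) : ℂ) *
          ∫ u in (-Real.pi)..Real.pi, ψ u * (Real.sin (n * u) : ℂ) := by
  have hψ_cont : Continuous ψ :=
    (LipschitzWith.of_dist_le' fun u v ↦ by
      simpa only [dist_eq_norm, Real.norm_eq_abs] using hlip u v).continuous
  have hφ_cont : Continuous φ := by
    rw [funext hφ]
    fun_prop
  have hn' : (n : ℝ) ≠ 0 := Nat.cast_ne_zero.2 (Nat.one_le_iff_ne_zero.1 hn)
  simp only [intervalIntegral.integral_of_le (neg_le_self Real.pi_pos.le)] at hf ⊢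
  exact_mod_cast statement16_general (volume.restrict (Set.Ioc (-Real.pi) Real.pi)) ψ φ hφ
    (hφ_cont.integrableOn_Icc.mono_set Set.Ioc_subset_Icc_self) f hf hn'
end
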